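/- If the theorem existence problem for finite Nmatrices is decidable — that is, if there is an algorithm which, given (an encoding of) a finite signature Σ and a finite Σ-Nmatrix M, decides whether Thm(Σ, ⊢_M) ≠ ∅ — then the halting problem for counter machines with all counters initially set to zero is decidable. Consequently, since the latter is undecidable, the theorem existence problem for finite Nmatrices is undecidable. -/

import Mathlib

structure Signature where
  Conn : Type
  arity : Conn → ℕ

inductive Fm (S : Signature) : Type where
  | var : ℕ → Fm S
  | app : (c : S.Conn) → (Fin (S.arity c) → Fm S) → Fm S

def Fm.subst {S : Signature} (σ : ℕ → Fm S) : Fm S → Fm S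
  | .var i => σ i
  | .app c args => .app c (fun j => (args j).subst σ)

def Fm.varsLT {S : Signature} (n : ℕ) : Fm S → Prop
  | .var i => i < n
  | .app _ args => ∀ j, (args j).varsLT n

structure NMatrix (S : Signature) (V : Type) where
  D : Set V
  interp : (c : S.Conn) → (Fin (S.arity c) → V) → Set V
  interp_nonempty : ∀ c args, (interp c args).Nonempty

def IsVal {S : Signature} {V : Type} (M : NMatrix S V) (v : Fm S → V) : Prop :=
  ∀ (c : S.Conn) (args : Fin (S.arity c) → Fm S),
    v (Fm.app c args) ∈ M.interp c (fun i => v (args i))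

def Entails {S : Signature} {V : Type} (M : NMatrix S V) (Γ : Set (Fm S)) (A : Fm S) : Prop :=
  ∀ v, IsVal M v → (∀ B ∈ Γ, v B ∈ M.D) → v A ∈ M.D

def Interderiv {S : Signature} {V : Type} (M : NMatrix S V) (A B : Fm S) : Prop :=
  Entails M {A} B ∧ Entails M {B} A

def Deterministic {S : Signature} {V : Type} (M : NMatrix S V) : Prop :=
  ∀ c args, ∃ x, M.interp c args = {x}

inductive CMNum : Type where
  | r0 | ge0 | ge1 | ge2
deriving DecidableEq

inductive CMInstr (n : ℕ) (Q : Type) : Type where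
  | inc : Fin n → Q → CMInstr n Q
  | dec : Fin n → Q → Q → CMInstr n Q

structure CounterMachine where
  n : ℕ
  Q : Type
  finQ : Finite Q
  qinit : Q
  δ : Q → Option (CMInstr n Q)

inductive CMVal (C : CounterMachine) : Type where
  | num : CMNum → CMVal C
  | conf : C.Q → (Fin C.n → CMNum) → CMVal C
  | init : CMVal C
  | error : CMVal C

inductive CMConn (C : CounterMachine) : Type where
  | zero : CMConn C
  | eps : CMConn C
  | succ : CMConn C
  | step : C.Q → CMConn C

def CMSig (C : CounterMachine) : Signature where
  Conn := CMConn C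
  arity := fun c => match c with
    | .zero => 0
    | .eps => 0
    | .succ => 1
    | .step _ => C.n + 1

/-- Interpretation of `succ` on abstract numbers. -/
def zeroNum : Set CMNum := {.r0, .ge0}

def succNum : CMNum → Set CMNum
  | .r0 => {.ge1}
  | .ge0 => {.ge0, .ge1}
  | .ge1 => {.ge2}
  | .ge2 => {.ge2}

/-- Interpretation of `succ` in the Nmatrix induced by `C`. -/
def succC (C : CounterMachine) : CMVal C → Set (CMVal C)
  | .num x => CMVal.num '' succNum x
  | _ => {.error}

/-- Interpretation of `zero` in the Nmatrix induced by `C`. -/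
def zeroC (C : CounterMachine) : Set (CMVal C) := {.num .r0, .num .ge0}

/-- The condition under which `step^q` applied to `x` and a tuple of numbers `zn`
produces the configuration value `conf q zn`. -/
def stepOK (C : CounterMachine) (q : C.Q) (x : CMVal C) (zn : Fin C.n → CMNum) : Prop :=
  (x = CMVal.init ∧ q = C.qinit ∧ ((∀ i, zn i = .r0) ∨ (∀ i, zn i = .ge0))) ∨
  (∃ (q' : C.Q) (yn : Fin C.n → CMNum), x = CMVal.conf q' yn ∧
    ((∃ i, C.δ q' = some (.inc i q) ∧ zn i ∈ succNum (yn i) ∧ ∀ l, l ≠ i → zn l = yn l) ∨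
     (∃ i s, C.δ q' = some (.dec i q s) ∧ yn i ∈ succNum (zn i) ∧ ∀ l, l ≠ i → zn l = yn l) ∨
     (∃ i s, C.δ q' = some (.dec i s q) ∧ yn i ∈ zeroNum ∧ zn = yn)))

/-- Interpretation of `step^q` in the Nmatrix induced by `C`. -/
def stepC (C : CounterMachine) (q : C.Q) (x : CMVal C) (z : Fin C.n → CMVal C) :
    Set (CMVal C) :=
  { w | (∃ zn : Fin C.n → CMNum, (∀ i, z i = .num (zn i)) ∧ stepOK C q x zn ∧
          w = .conf q zn) ∨
        (¬ (∃ zn : Fin C.n → CMNum, (∀ i, z i = .num (zn i)) ∧ stepOK C q x zn) ∧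
          w = .error) }

lemma succC_nonempty (C : CounterMachine) (x : CMVal C) : (succC C x).Nonempty := by
  cases x with
  | num y =>
      cases y
      · exact ⟨.num .ge1, by simp [succC, succNum]⟩
      · exact ⟨.num .ge0, by simp [succC, succNum]⟩
      · exact ⟨.num .ge2, by simp [succC, succNum]⟩
      · exact ⟨.num .ge2, by simp [succC, succNum]⟩
  | conf q r => exact ⟨.error, rfl⟩
  | init => exact ⟨.error, rfl⟩
  | error => exact ⟨.error, rfl⟩

lemma stepC_nonempty (C : CounterMachine) (q : C.Q) (x : CMVal C)
    (z : Fin C.n → CMVal C) : (stepC C q x z).Nonempty := by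
  by_cases h : ∃ zn : Fin C.n → CMNum, (∀ i, z i = .num (zn i)) ∧ stepOK C q x zn
  · obtain ⟨zn, hz, hok⟩ := h
    exact ⟨.conf q zn, Or.inl ⟨zn, hz, hok, rfl⟩⟩
  · exact ⟨.error, Or.inr ⟨h, rfl⟩⟩

/-- The Nmatrix ℂ induced by the counter machine `C`. -/
def CMmatrix (C : CounterMachine) : NMatrix (CMSig C) (CMVal C) where
  D := { w | ∃ (q : C.Q) (r : Fin C.n → CMNum), w = CMVal.conf q r ∧ C.δ q = none }
  interp := fun c => match c with
    | .zero => fun _ => zeroC C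
    | .eps => fun _ => {CMVal.init}
    | .succ => fun args => succC C (args ⟨0, Nat.one_pos⟩)
    | .step q => fun args => stepC C q (args ⟨0, Nat.succ_pos _⟩) (fun i => args i.succ)
  interp_nonempty := by
    intro c args
    cases c with
    | zero => exact ⟨.num .r0, Or.inl rfl⟩
    | eps => exact ⟨.init, rfl⟩
    | succ => exact succC_nonempty C _
    | step q => exact stepC_nonempty C q _ _

/-- Encoding of natural numbers as closed formulas. -/
def enc (C : CounterMachine) : ℕ → Fm (CMSig C)
  | 0 => .app .zero (fun i => i.elim0)
  | a + 1 => .app .succ (fun _ => enc C a)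

/-- Configurations of a counter machine. -/
def Config (C : CounterMachine) : Type := C.Q × (Fin C.n → ℕ)

/-- One step of computation: `none` when the configuration is halting. -/
def nextConf (C : CounterMachine) (cfg : Config C) : Option (Config C) :=
  match C.δ cfg.1 with
  | none => none
  | some (.inc i q') => some (q', Function.update cfg.2 i (cfg.2 i + 1))
  | some (.dec i q' q'') =>
      if cfg.2 i = 0 then some (q'', cfg.2)
      else some (q', Function.update cfg.2 i (cfg.2 i - 1))

/-- The configuration reached after `k` steps starting from ⟨q_init, 0⃗⟩, or `none` if the
machine has already halted strictly before step `k`. -/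
def steps (C : CounterMachine) : ℕ → Option (Config C)
  | 0 => some (C.qinit, fun _ => 0)
  | k + 1 => (steps C k).bind (nextConf C)

/-- A configuration is halting when the transition function is undefined on its state. -/
def Halting (C : CounterMachine) (cfg : Config C) : Prop := C.δ cfg.1 = none

/-- Encoding of a reversed list of configurations as a formula (head = last configuration). -/
def seqRev (C : CounterMachine) : List (Config C) → Fm (CMSig C)
  | [] => .app .eps (fun i => i.elim0)
  | cfg :: rest =>
      .app (.step cfg.1) (Fin.cons (seqRev C rest) (fun i => enc C (cfg.2 i)))

/-- Encoding of a finite sequence of configurations as a formula. -/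
def seqFm (C : CounterMachine) (l : List (Config C)) : Fm (CMSig C) := seqRev C l.reverse

/-- The list of configurations ⟨C₀, …, C_k⟩ of the computation of `C` from all counters zero. -/
def compList (C : CounterMachine) (k : ℕ) : List (Config C) :=
  (List.range (k + 1)).filterMap (steps C)

/-- The signature encoded by a list of arities. -/
abbrev codeSig (ar : List ℕ) : Signature := ⟨Fin ar.length, fun j => ar.get j⟩

-- The finite Σ-Nmatrix encoded by the data `(ar, m, tbl, ds)`: its truth-values are
-- `Fin (m+1)`, its designated values are those listed in `ds`, and the interpretation of
-- connective `j` on an argument tuple is read off from the table `tbl` (defaulting to `{0}`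
-- on malformed entries, so that decoding is total).
open Classical in
noncomputable def decodeNMat (ar : List ℕ) (m : ℕ) (tbl : List (List (List ℕ)))
    (ds : List ℕ) : NMatrix (codeSig ar) (Fin (m + 1)) where
  D := { x : Fin (m + 1) | (x : ℕ) ∈ ds }
  interp := fun j args =>
    let row := (tbl.getD (j : ℕ) []).getD (∑ i, ((args i) : ℕ) * (m + 1) ^ (i : ℕ)) []
    if ∃ x : Fin (m + 1), (x : ℕ) ∈ row then { x : Fin (m + 1) | (x : ℕ) ∈ row } else {0}
  interp_nonempty := by
    intro j args
    dsimp only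
    split
    · next h => exact h
    · exact ⟨0, rfl⟩

/-- Codes of finite Nmatrices (the signature part, a list of arities, comes first). -/
abbrev NMatCode : Type := List ℕ × ℕ × List (List (List ℕ)) × List ℕ

/-- The theorem existence problem for finite Nmatrices, as a predicate on codes. -/
noncomputable def thmExistsProblem (c : NMatCode) : Prop :=
  ∃ A : Fm (codeSig c.1), Entails (decodeNMat c.1 c.2.1 c.2.2.1 c.2.2.2) ∅ A

/-- Codes of counter machines: number of counters, number of states minus one, initial
state, and the transition table (entry `q`: `none` = halt, `inl (i,q')` = inc(i) then q',
`inr (i,q',q'')` = dec(i) branching to q' / q''). -/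
abbrev CMCode : Type := ℕ × ℕ × ℕ × List (Option ((ℕ × ℕ) ⊕ (ℕ × ℕ × ℕ)))

/-- The counter machine encoded by `(n, s, q0, tbl)`; states are `Fin (s+1)` and malformed
entries are treated as halting. -/
def decodeCM (n s q0 : ℕ) (tbl : List (Option ((ℕ × ℕ) ⊕ (ℕ × ℕ × ℕ)))) :
    CounterMachine where
  n := n
  Q := Fin (s + 1)
  finQ := Finite.of_fintype _
  qinit := ⟨q0 % (s + 1), Nat.mod_lt _ (Nat.succ_pos s)⟩
  δ := fun q =>
    match tbl.getD q.val none with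
    | none => none
    | some (.inl (i, q')) =>
        if h : i < n then
          some (.inc ⟨i, h⟩ ⟨q' % (s + 1), Nat.mod_lt _ (Nat.succ_pos s)⟩)
        else none
    | some (.inr (i, q', q'')) =>
        if h : i < n then
          some (.dec ⟨i, h⟩ ⟨q' % (s + 1), Nat.mod_lt _ (Nat.succ_pos s)⟩
            ⟨q'' % (s + 1), Nat.mod_lt _ (Nat.succ_pos s)⟩)
        else none

/-- A counter machine halts from zero if its computation with all counters initially zero
reaches a halting configuration. -/
def cmHaltsFromZero (C : CounterMachine) : Prop :=
  ∃ (k : ℕ) (cfg : Config C), steps C k = some cfg ∧ Halting C cfg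

/-- The halting problem for counter machines started with all counters zero. -/
def haltProblem (c : CMCode) : Prop :=
  cmHaltsFromZero (decodeCM c.1 c.2.1 c.2.2.1 c.2.2.2)

/-!
A valuation of ℂ reads the numerals through a numbering: a map from natural numbers to abstract
numbers that respects zero and successor. A step of the computation of `C` is respected by every
numbering, so the formula of a halting computation is a theorem. Conversely, the numberings
`threshold θ` separate natural numbers, so that a formula designated under all the valuations they
induce must be built along an actual computation of `C`.

The halting problem is undecidable because programs made of increments and loops compute all partial
recursive functions, and such a program runs on a counter machine whose states are the programs that
may remain to be executed. The input `N` becomes a prefix of `N` increments.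

For the reduction to be computable, the truth-values of ℂ are numbered, with base-4 digits for the
abstract numbers in a configuration, and membership in its interpretations becomes a primitive
recursive relation between these numbers.
-/

/-! ### Numberings -/

namespace CMmatrix

variable {C : CounterMachine} {ν : ℕ → CMNum}

/-- The readings of the natural numbers as abstract numbers that valuations of ℂ can realize on
the numerals `enc C a`. -/
def IsNumbering (ν : ℕ → CMNum) : Prop :=
  ν 0 ∈ zeroNum ∧ ∀ a, ν (a + 1) ∈ succNum (ν a)

/-- The numbering that gives the value `ge0` to exactly the numbers below `θ`, hence separates them
from the others; for `θ = 0` it singles out zero by the value `r0`. -/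
def threshold (θ a : ℕ) : CMNum :=
  if a < θ then .ge0 else if a = 0 then .r0 else if a ≤ max θ 1 then .ge1 else .ge2

lemma isNumbering_threshold (θ : ℕ) : IsNumbering (threshold θ) := by
  refine ⟨?_, fun a => ?_⟩
  · obtain rfl | hθ := Nat.eq_zero_or_pos θ
    · exact Or.inl rfl
    · exact Or.inr (if_pos hθ)
  · unfold threshold
    split_ifs <;> simp [succNum] <;> omega

lemma threshold_eq_ge0 {θ a : ℕ} : threshold θ a = .ge0 ↔ a < θ := by
  unfold threshold
  split_ifs <;> simp_all

lemma threshold_eq_r0 {θ a : ℕ} : threshold θ a = .r0 ↔ θ = 0 ∧ a = 0 := by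
  unfold threshold
  split_ifs <;> simp <;> omega

lemma threshold_mem_zeroNum {θ a : ℕ} : threshold θ a ∈ zeroNum ↔ a < θ ∨ a = 0 := by
  simp only [zeroNum, Set.mem_insert_iff, Set.mem_singleton_iff, threshold_eq_ge0, threshold_eq_r0]
  omega

lemma r0_notMem_succNum (x : CMNum) : .r0 ∉ succNum x := by
  cases x <;> simp [succNum]

lemma eq_of_mem_succNum_of_mem_zeroNum {x y : CMNum} (hx : x ∈ succNum y) (h0 : x ∈ zeroNum) :
    y = x := by
  cases x <;> cases y <;> simp_all [succNum, zeroNum]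

lemma eq_of_forall_numbering {a b : ℕ} (h : ∀ ν, IsNumbering ν → ν a = ν b) : a = b := by
  have hlt : ∀ θ, a < θ ↔ b < θ := fun θ => by
    rw [← threshold_eq_ge0, ← threshold_eq_ge0, h _ (isNumbering_threshold θ)]
  have := hlt (a + 1)
  have := hlt (b + 1)
  omega

lemma eq_succ_of_forall_threshold {a b : ℕ}
    (h : ∀ θ ≤ b, threshold θ b ∈ succNum (threshold θ a)) : b = a + 1 := by
  have hb : 0 < b := by
    by_contra hb
    have h0 := h 0 b.zero_le
    rw [threshold_eq_r0.2 ⟨rfl, Nat.eq_zero_of_not_pos hb⟩] at h0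
    exact r0_notMem_succNum _ h0
  have hle : a + 1 ≤ b := by
    by_contra hab
    have hbb := h b le_rfl
    have hbge1 : threshold b b = .ge1 := by simp [threshold, hb.ne']
    rw [hbge1, threshold, if_neg (by omega), if_neg (by omega)] at hbb
    split_ifs at hbb <;> simp [succNum] at hbb
  have hge : b ≤ a + 1 := by
    by_contra hab
    have haa := h (a + 1) hle
    rw [threshold_eq_ge0.2 a.lt_succ_self, threshold, if_neg (by omega), if_neg (by omega),
      if_neg (by omega)] at haa
    simp [succNum] at haa
  exact le_antisymm hge hle

/-! ### Computations as formulas -/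

/-- The value in ℂ of a configuration whose counters are read through the numbering `ν`. -/
def abstractConf (ν : ℕ → CMNum) (cfg : Config C) : CMVal C := .conf cfg.1 (ν ∘ cfg.2)

/-- The configurations met by the computation of `C` started with all counters zero. -/
def IsReachable (C : CounterMachine) (cfg : Config C) : Prop := ∃ k, steps C k = some cfg

lemma isReachable_init : IsReachable C (C.qinit, fun _ => 0) := ⟨0, rfl⟩

lemma IsReachable.next {cfg cfg' : Config C} (h : IsReachable C cfg)
    (hn : nextConf C cfg = some cfg') : IsReachable C cfg' := by
  obtain ⟨k, hk⟩ := h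
  exact ⟨k + 1, by rw [steps, hk, Option.bind_some, hn]⟩

/-- The transition relation of an instruction on abstract numbers: the counters `y` are turned into
`z` and the state becomes `q`. -/
def AbstractStep (q : C.Q) (y z : Fin C.n → CMNum) : Option (CMInstr C.n C.Q) → Prop
  | none => False
  | some (.inc i t) => t = q ∧ z i ∈ succNum (y i) ∧ ∀ l, l ≠ i → z l = y l
  | some (.dec i t t') => (t = q ∧ y i ∈ succNum (z i) ∧ ∀ l, l ≠ i → z l = y l) ∨
      (t' = q ∧ y i ∈ zeroNum ∧ z = y)

lemma stepOK_conf_iff {q q' : C.Q} {y z : Fin C.n → CMNum} :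
    stepOK C q (.conf q' y) z ↔ AbstractStep q y z (C.δ q') := by
  unfold stepOK
  rcases hδ : C.δ q' with _ | ⟨i, t⟩ | ⟨i, t, t'⟩ <;> simp [AbstractStep, hδ, and_assoc]

lemma stepOK_of_nextConf (hν : IsNumbering ν) {cfg cfg' : Config C}
    (h : nextConf C cfg = some cfg') :
    stepOK C cfg'.1 (abstractConf ν cfg) (ν ∘ cfg'.2) := by
  obtain ⟨q, y⟩ := cfg
  refine stepOK_conf_iff.2 ?_
  unfold nextConf at h
  rcases hδ : C.δ q with _ | ⟨i, t⟩ | ⟨i, t, t'⟩ <;> simp only [hδ] at h ⊢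
  · exact nomatch h
  · cases h
    exact ⟨rfl, by simpa using hν.2 (y i), fun l hl => by simp [hl]⟩
  · split_ifs at h with hy <;> cases h
    · exact Or.inr ⟨rfl, by simpa [hy] using hν.1, rfl⟩
    · refine Or.inl ⟨rfl, ?_, fun l hl => by simp [hl]⟩
      simpa [Nat.sub_add_cancel (Nat.pos_of_ne_zero hy)] using hν.2 (y i - 1)

lemma nextConf_of_forall_stepOK {cfg : Config C} {q : C.Q} {z : Fin C.n → ℕ}
    (h : ∀ ν, IsNumbering ν → stepOK C q (abstractConf ν cfg) (ν ∘ z)) :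
    nextConf C cfg = some (q, z) := by
  obtain ⟨q', y⟩ := cfg
  simp only [abstractConf, stepOK_conf_iff] at h
  have hθ := fun θ => h _ (isNumbering_threshold θ)
  unfold nextConf
  rcases hδ : C.δ q' with _ | ⟨i, t⟩ | ⟨i, t, t'⟩ <;>
    simp only [hδ, AbstractStep, Function.comp_apply] at h hθ ⊢
  · exact (hθ 0).elim
  · obtain ⟨rfl, -⟩ := hθ 0
    have hi : z i = y i + 1 := eq_succ_of_forall_threshold fun θ _ => (hθ θ).2.1
    have hne : ∀ l, l ≠ i → z l = y l := fun l hl =>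
      eq_of_forall_numbering fun ν hν => (h ν hν).2.2 l hl
    rw [← hi, Function.update_eq_iff.2 ⟨rfl, fun l hl => (hne l hl).symm⟩]
    rfl
  · have hne : ∀ l, l ≠ i → z l = y l := fun l hl => eq_of_forall_numbering fun ν hν =>
      (h ν hν).elim (fun hs => hs.2.2 l hl) fun hs => congrFun hs.2.2 l
    split_ifs with hy
    · have hzy : z i = y i := eq_of_forall_numbering fun ν hν => (h ν hν).elim
        (fun hs => eq_of_mem_succNum_of_mem_zeroNum hs.2.1 (hy ▸ hν.1))
        fun hs => congrFun hs.2.2 i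
      have hq : t' = q := (hθ 0).elim
        (fun hs => (r0_notMem_succNum _ (threshold_eq_r0.2 ⟨rfl, hy⟩ ▸ hs.2.1)).elim) And.left
      rw [hq, show z = y from funext fun l => (eq_or_ne l i).elim (fun hl => hl ▸ hzy) (hne l)]
      rfl
    · have hs : ∀ θ ≤ y i, t = q ∧ threshold θ (y i) ∈ succNum (threshold θ (z i)) := fun θ hθy =>
        (hθ θ).elim (fun hs => ⟨hs.1, hs.2.1⟩) fun hs =>
          absurd (threshold_mem_zeroNum.1 hs.2.1) (not_or.2 ⟨hθy.not_gt, hy⟩)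
      have hyz : y i = z i + 1 := eq_succ_of_forall_threshold fun θ hθy => (hs θ hθy).2
      rw [(hs 0 (y i).zero_le).1, Function.update_eq_iff.2 ⟨by omega, fun l hl => (hne l hl).symm⟩]
      rfl

variable {v : Fm (CMSig C) → CMVal C}

lemma conf_mem_stepC_iff {q q' : C.Q} {x : CMVal C} {z : Fin C.n → CMVal C} {r : Fin C.n → CMNum} :
    .conf q' r ∈ stepC C q x z ↔ q' = q ∧ (∀ i, z i = .num (r i)) ∧ stepOK C q x r := by
  constructor
  · rintro (⟨r', hz, h, hr⟩ | ⟨-, h⟩)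
    · cases hr
      exact ⟨rfl, hz, h⟩
    · exact nomatch h
  · rintro ⟨rfl, hz, h⟩
    exact Or.inl ⟨r, hz, h, rfl⟩

lemma eq_conf_of_stepOK {q : C.Q} {x w : CMVal C} {r : Fin C.n → CMNum}
    (h : stepOK C q x r) (hw : w ∈ stepC C q x fun i => .num (r i)) : w = .conf q r := by
  obtain ⟨r', hr', -, rfl⟩ | ⟨hno, -⟩ := hw
  · rw [show r = r' from funext fun i => CMVal.num.inj (hr' i)]
  · exact absurd ⟨r, fun _ => rfl, h⟩ hno

lemma exists_numbering (hv : IsVal (CMmatrix C) v) :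
    ∃ ν, IsNumbering ν ∧ ∀ a, v (enc C a) = .num (ν a) := by
  have hnum : ∀ a, ∃ x, v (enc C a) = .num x := fun a => by
    induction a with
    | zero => obtain h | h := hv .zero (fun i => i.elim0) <;> exact ⟨_, h⟩
    | succ a ih =>
      obtain ⟨x, hx⟩ := ih
      have h : v (enc C (a + 1)) ∈ succC C (v (enc C a)) := hv .succ fun _ => enc C a
      rw [hx] at h
      obtain ⟨y, -, hy⟩ := h
      exact ⟨y, hy.symm⟩
  choose ν hν using hnum
  refine ⟨ν, ⟨?_, fun a => ?_⟩, hν⟩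
  · obtain h | h := hv .zero (fun i => i.elim0)
    · exact Or.inl (CMVal.num.inj ((hν 0).symm.trans h))
    · exact Or.inr (CMVal.num.inj ((hν 0).symm.trans h))
  · have h : v (enc C (a + 1)) ∈ succC C (v (enc C a)) := hv .succ fun _ => enc C a
    rw [hν, hν] at h
    obtain ⟨y, hy, hya⟩ := h
    rwa [← CMVal.num.inj hya]

lemma apply_seqRev_cons (hv : IsVal (CMmatrix C) v) (hν : ∀ a, v (enc C a) = .num (ν a))
    {cfg : Config C} {l : List (Config C)}
    (h : stepOK C cfg.1 (v (seqRev C l)) (ν ∘ cfg.2)) :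
    v (seqRev C (cfg :: l)) = abstractConf ν cfg := by
  have hw : v (seqRev C (cfg :: l)) ∈
      stepC C cfg.1 (v (seqRev C l)) fun i => v (enc C (cfg.2 i)) :=
    hv (.step cfg.1) (Fin.cons (seqRev C l) fun i => enc C (cfg.2 i))
  simp only [hν] at hw
  exact eq_conf_of_stepOK h hw

lemma exists_apply_seqRev_eq {cfg : Config C} (h : IsReachable C cfg) :
    ∃ l, ∀ v, IsVal (CMmatrix C) v → ∃ ν, v (seqRev C l) = abstractConf ν cfg := by
  suffices ∃ l, ∀ v ν, IsVal (CMmatrix C) v → IsNumbering ν → (∀ a, v (enc C a) = .num (ν a)) →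
      v (seqRev C l) = abstractConf ν cfg by
    obtain ⟨l, hl⟩ := this
    refine ⟨l, fun v hv => ?_⟩
    obtain ⟨ν, hν, hvν⟩ := exists_numbering hv
    exact ⟨ν, hl v ν hv hν hvν⟩
  obtain ⟨k, hk⟩ := h
  induction k generalizing cfg with
  | zero =>
    cases hk
    refine ⟨[(C.qinit, fun _ => 0)], fun v ν hv hν hvν => apply_seqRev_cons hv hvν ?_⟩
    exact Or.inl ⟨hv .eps _, rfl, hν.1.imp (fun h _ => h) fun h _ => h⟩
  | succ k ih =>
    obtain ⟨cfg', hk', hnext⟩ := Option.bind_eq_some_iff.1 hk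
    obtain ⟨l, hl⟩ := ih hk'
    refine ⟨cfg :: l, fun v ν hv hν hvν => apply_seqRev_cons hv hvν ?_⟩
    rw [hl v ν hv hν hvν]
    exact stepOK_of_nextConf hν hnext

/-! ### The canonical valuations -/

lemma enc_injective : Function.Injective (enc C) := by
  intro a b h
  induction a generalizing b with
  | zero => cases b with
    | zero => rfl
    | succ b => exact nomatch h
  | succ a ih => cases b with
    | zero => exact nomatch h
    | succ b => exact congrArg _ (ih (congrFun (eq_of_heq (Fm.app.inj h).2) ⟨0, Nat.one_pos⟩))

open Classical in
/-- The valuation that reads numerals through `ν`, sends variables to `error`, and is determined by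
these requirements because ℂ is deterministic away from the numerals. -/
noncomputable def canonicalVal (ν : ℕ → CMNum) : Fm (CMSig C) → CMVal C
  | .var _ => .error
  | .app c args =>
    if h : ∃ a, .app c args = enc C a then .num (ν h.choose)
    else ((CMmatrix C).interp_nonempty c fun i => canonicalVal ν (args i)).some

lemma canonicalVal_enc (a : ℕ) : canonicalVal ν (enc C a) = .num (ν a) := by
  obtain ⟨c, args, h⟩ : ∃ c args, enc C a = .app c args := by cases a <;> exact ⟨_, _, rfl⟩
  have ha : ∃ b, .app c args = enc C b := ⟨a, h.symm⟩
  rw [h, canonicalVal, dif_pos ha, ← enc_injective (h.trans ha.choose_spec)]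

lemma isVal_canonicalVal (hν : IsNumbering ν) : IsVal (CMmatrix C) (canonicalVal ν) := by
  intro c args
  by_cases h : ∃ a, .app c args = enc C a
  · obtain ⟨a, ha⟩ := h
    rw [ha, canonicalVal_enc]
    cases a <;> cases ha
    · exact hν.1.imp (congrArg _) (congrArg _)
    · simp only [canonicalVal_enc]
      exact Set.mem_image_of_mem _ (hν.2 _)
  · rw [canonicalVal, dif_neg h]
    exact Set.Nonempty.some_mem _

lemma exists_enc_of_canonicalVal_eq_num (hν : IsNumbering ν) {A : Fm (CMSig C)} {x : CMNum}
    (h : canonicalVal ν A = .num x) : ∃ a, A = enc C a := by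
  induction A generalizing x with
  | var i => simp [canonicalVal] at h
  | app c args ih =>
    have hA := isVal_canonicalVal hν c args
    rw [h] at hA
    cases c with
    | zero => exact ⟨0, congrArg _ (funext fun i => i.elim0)⟩
    | eps => simp [CMmatrix] at hA
    | succ =>
      change _ ∈ succC C (canonicalVal ν (args ⟨0, Nat.one_pos⟩)) at hA
      unfold succC at hA
      split at hA
      case h_1 y hy =>
        obtain ⟨a, ha⟩ := ih _ hy
        refine ⟨a + 1, congrArg _ (funext fun i => ?_)⟩
        rw [← ha, Fin.fin_one_eq_zero i]
        rfl
      case h_2 => simp at hA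
    | step q =>
      obtain ⟨_, -, -, h'⟩ | ⟨-, h'⟩ := hA <;> simp at h'

lemma eq_eps_of_canonicalVal_eq_init (hν : IsNumbering ν) {A : Fm (CMSig C)}
    (h : canonicalVal ν A = .init) : A = seqRev C [] := by
  cases A with
  | var i => simp [canonicalVal] at h
  | app c args =>
    have hA := isVal_canonicalVal hν c args
    rw [h] at hA
    cases c with
    | zero => simp [CMmatrix, zeroC] at hA
    | eps => exact congrArg _ (funext fun i => i.elim0)
    | succ =>
      change _ ∈ succC C _ at hA
      unfold succC at hA
      split at hA <;> simp at hA
    | step q =>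
      obtain ⟨_, -, -, h'⟩ | ⟨-, h'⟩ := hA <;> simp at h'

lemma conf_notMem_succC (q : C.Q) (r : Fin C.n → CMNum) (x : CMVal C) : .conf q r ∉ succC C x := by
  cases x <;> simp [succC]

lemma stepOK_init_threshold {q : C.Q} {z : Fin C.n → ℕ}
    (h : stepOK C q .init (threshold 0 ∘ z)) : q = C.qinit ∧ z = fun _ => 0 := by
  obtain ⟨-, hq, hr | hge⟩ | ⟨_, _, h, -⟩ := h
  · exact ⟨hq, funext fun i => (threshold_eq_r0.1 (hr i)).2⟩
  · exact ⟨hq, funext fun i => absurd (threshold_eq_ge0.1 (hge i)) (Nat.not_lt_zero _)⟩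
  · exact nomatch h

lemma exists_forall_stepOK {q : C.Q} {args : Fin (C.n + 1) → Fm (CMSig C)}
    (h : ∀ ν, IsNumbering ν → ∃ q' r, canonicalVal ν (.app (.step q) args) = .conf q' r) :
    ∃ z : Fin C.n → ℕ, ∀ ν, IsNumbering ν →
      canonicalVal ν (.app (.step q) args) = abstractConf ν (q, z) ∧
        stepOK C q (canonicalVal ν (args 0)) (ν ∘ z) := by
  have hstep : ∀ ν, IsNumbering ν → ∃ r, canonicalVal ν (.app (.step q) args) = .conf q r ∧
      (∀ i, canonicalVal ν (args (Fin.succ i)) = .num (r i)) ∧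
      stepOK C q (canonicalVal ν (args 0)) r := fun ν hν => by
    obtain ⟨q', r, hr⟩ := h ν hν
    have hmem := isVal_canonicalVal hν (.step q) args
    rw [hr] at hmem
    obtain ⟨rfl, h'⟩ := conf_mem_stepC_iff.1 hmem
    exact ⟨r, hr, h'⟩
  have henc : ∀ i, ∃ a, args (Fin.succ i) = enc C a := fun i =>
    let ⟨_, _, hr, _⟩ := hstep _ (isNumbering_threshold 0)
    exists_enc_of_canonicalVal_eq_num (isNumbering_threshold 0) (hr i)
  choose z hz using henc
  refine ⟨z, fun ν hν => ?_⟩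
  obtain ⟨r, hr, hrz, hok⟩ := hstep ν hν
  obtain rfl : r = ν ∘ z := funext fun i =>
    CMVal.num.inj ((hrz i).symm.trans (by rw [hz, canonicalVal_enc, Function.comp_apply]))
  exact ⟨hr, hok⟩

lemma exists_isReachable_step {q : C.Q} {args : Fin (C.n + 1) → Fm (CMSig C)}
    (ih : (∀ ν, IsNumbering ν → ∃ q r, canonicalVal ν (args 0) = .conf q r) →
      ∃ cfg, IsReachable C cfg ∧
        ∀ ν, IsNumbering ν → canonicalVal ν (args 0) = abstractConf ν cfg)
    (h : ∀ ν, IsNumbering ν → ∃ q' r, canonicalVal ν (.app (.step q) args) = .conf q' r) :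
    ∃ cfg, IsReachable C cfg ∧
      ∀ ν, IsNumbering ν → canonicalVal ν (.app (.step q) args) = abstractConf ν cfg := by
  obtain ⟨z, hz⟩ := exists_forall_stepOK h
  refine ⟨(q, z), ?_, fun ν hν => (hz ν hν).1⟩
  by_cases h0 : args 0 = seqRev C []
  · have hν := isNumbering_threshold 0
    have hinit : canonicalVal (threshold 0) (args 0) = .init := by
      rw [h0]
      exact isVal_canonicalVal hν .eps _
    obtain ⟨rfl, rfl⟩ := stepOK_init_threshold (hinit ▸ (hz _ hν).2)
    exact isReachable_init
  · have hconf : ∀ ν, IsNumbering ν → ∃ q r, canonicalVal ν (args 0) = .conf q r := fun ν hν => by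
      obtain ⟨hinit, -⟩ | ⟨q', r, hq', -⟩ := (hz ν hν).2
      · exact absurd (eq_eps_of_canonicalVal_eq_init hν hinit) h0
      · exact ⟨q', r, hq'⟩
    obtain ⟨cfg, hcfg, hval⟩ := ih hconf
    exact hcfg.next (nextConf_of_forall_stepOK fun ν hν => hval ν hν ▸ (hz ν hν).2)

/-- The idea of the reduction: canonical valuations for enough thresholds together see the exact
numbers in a formula, so a formula that all of them accept must describe a genuine computation. -/
lemma exists_isReachable_of_forall_canonicalVal {A : Fm (CMSig C)}
    (h : ∀ ν, IsNumbering ν → ∃ q r, canonicalVal ν A = .conf q r) :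
    ∃ cfg, IsReachable C cfg ∧ ∀ ν, IsNumbering ν → canonicalVal ν A = abstractConf ν cfg := by
  induction A with
  | var i => simpa [canonicalVal] using h _ (isNumbering_threshold 0)
  | app c args ih =>
    have hval := fun ν (hν : IsNumbering ν) => isVal_canonicalVal hν c args
    obtain ⟨q₀, r₀, h₀⟩ := h _ (isNumbering_threshold 0)
    cases c with
    | zero => simpa [h₀, CMmatrix, zeroC] using hval _ (isNumbering_threshold 0)
    | eps => simpa [h₀, CMmatrix] using hval _ (isNumbering_threshold 0)
    | succ =>
      exact absurd (h₀ ▸ hval _ (isNumbering_threshold 0)) (conf_notMem_succC _ _ _)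
    | step q => exact exists_isReachable_step (ih (0 : Fin (C.n + 1))) h

theorem exists_entails_iff_halts :
    (∃ A, Entails (CMmatrix C) ∅ A) ↔ cmHaltsFromZero C := by
  constructor
  · rintro ⟨A, hA⟩
    have hD : ∀ ν, IsNumbering ν → canonicalVal ν A ∈ (CMmatrix C).D := fun ν hν =>
      hA _ (isVal_canonicalVal hν) (by simp)
    obtain ⟨cfg, ⟨k, hk⟩, hcfg⟩ := exists_isReachable_of_forall_canonicalVal fun ν hν =>
      let ⟨q, r, h, _⟩ := hD ν hν
      ⟨q, r, h⟩
    obtain ⟨q, r, h, hq⟩ := hD _ (isNumbering_threshold 0)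
    rw [hcfg _ (isNumbering_threshold 0)] at h
    cases h
    exact ⟨k, cfg, hk, hq⟩
  · rintro ⟨k, cfg, hk, hhalt⟩
    obtain ⟨l, hl⟩ := exists_apply_seqRev_eq ⟨k, hk⟩
    refine ⟨seqRev C l, fun v hv _ => ?_⟩
    obtain ⟨ν, hν⟩ := hl v hv
    exact ⟨cfg.1, ν ∘ cfg.2, hν, hhalt⟩

lemma eq_error_of_mem_interp {C : CounterMachine} {κ : CMConn C}
    {a : Fin ((CMSig C).arity κ) → CMVal C} {x : CMVal C}
    (herr : .error ∈ (CMmatrix C).interp κ a) (hx : x ∈ (CMmatrix C).interp κ a) : x = .error := by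
  cases κ with
  | zero => simp [CMmatrix, zeroC] at herr
  | eps => simp [CMmatrix] at herr
  | succ =>
    change .error ∈ succC C _ at herr
    change x ∈ succC C _ at hx
    unfold succC at herr hx
    split at herr
    · simp at herr
    · simp_all
  | step q =>
    rcases herr with ⟨_, _, _, h⟩ | ⟨hno, -⟩
    · cases h
    · exact hx.elim (fun ⟨r, hr, hok, _⟩ => (hno ⟨r, hr, hok⟩).elim) And.right

end CMmatrix

/-! ### Programs for counter machines -/

/-- Loop programs on counters indexed by `ℕ`, in continuation form: `inc i K` increments the counter
`i` and goes on with `K`; `loop i B K` decrements the counter `i` and executes `B` as long as the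
counter is not zero, and then goes on with `K`. The remaining program serves as the state of a
counter machine. -/
inductive LoopProg : Type where
  | nil : LoopProg
  | inc : ℕ → LoopProg → LoopProg
  | loop : ℕ → LoopProg → LoopProg → LoopProg
deriving DecidableEq

namespace LoopProg

/-- Sequential composition. -/
def append : LoopProg → LoopProg → LoopProg
  | nil, L => L
  | inc i K, L => inc i (append K L)
  | loop i B K, L => loop i B (append K L)

instance : Append LoopProg := ⟨append⟩

@[simp] lemma nil_append (L : LoopProg) : nil ++ L = L := rfl

@[simp] lemma inc_append (i : ℕ) (K L : LoopProg) : inc i K ++ L = inc i (K ++ L) := rfl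

@[simp] lemma loop_append (i : ℕ) (B K L : LoopProg) : loop i B K ++ L = loop i B (K ++ L) := rfl

lemma append_assoc (P Q R : LoopProg) : P ++ Q ++ R = P ++ (Q ++ R) := by
  induction P with
  | nil => rfl
  | inc i K ih => simp [ih]
  | loop i B K _ ih => simp [ih]

/-- `Run P σ τ`: the program `P` started on the counter values `σ` terminates with the counter
values `τ`. -/
inductive Run : LoopProg → (ℕ → ℕ) → (ℕ → ℕ) → Prop where
  | nil (σ) : Run nil σ σ
  | inc {i K σ τ} : Run K (Function.update σ i (σ i + 1)) τ → Run (inc i K) σ τ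
  | loop_zero {i B K σ τ} : σ i = 0 → Run K σ τ → Run (loop i B K) σ τ
  | loop_succ {i B K σ ρ τ} : σ i ≠ 0 → Run B (Function.update σ i (σ i - 1)) ρ →
      Run (loop i B K) ρ τ → Run (loop i B K) σ τ

lemma Run.eq {P : LoopProg} {σ τ τ' : ℕ → ℕ} (h : Run P σ τ) (h' : Run P σ τ') : τ = τ' := by
  induction h generalizing τ' with
  | nil σ => cases h'; rfl
  | inc _ ih =>
    cases h' with
    | inc h' => exact ih h'
  | loop_zero h0 _ ih =>
    cases h' with
    | loop_zero _ h' => exact ih h'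
    | loop_succ h1 => exact absurd h0 h1
  | loop_succ h1 _ _ ihB ih =>
    cases h' with
    | loop_zero h0 => exact absurd h0 h1
    | loop_succ _ hB h' => exact ih ((ihB hB).symm ▸ h')

lemma Run.append {P L : LoopProg} {σ ρ τ : ℕ → ℕ} (hP : Run P σ ρ) (hL : Run L ρ τ) :
    Run (P ++ L) σ τ := by
  induction hP with
  | nil σ => exact hL
  | inc _ ih => exact .inc (ih hL)
  | loop_zero h0 _ ih => exact .loop_zero h0 (ih hL)
  | loop_succ h1 hB _ _ ih => exact .loop_succ h1 hB (ih hL)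

lemma run_append_iff {P L : LoopProg} {σ τ : ℕ → ℕ} :
    Run (P ++ L) σ τ ↔ ∃ ρ, Run P σ ρ ∧ Run L ρ τ := by
  refine ⟨fun h => ?_, fun ⟨ρ, hP, hL⟩ => hP.append hL⟩
  generalize hQ : P ++ L = Q at h
  induction h generalizing P with
  | nil σ => cases P <;> cases hQ; exact ⟨σ, .nil σ, .nil σ⟩
  | @inc i K σ τ hK ih =>
    cases P with
    | nil => cases hQ; exact ⟨σ, .nil σ, .inc hK⟩
    | inc i K =>
      cases hQ
      obtain ⟨ρ, hρ, hL⟩ := ih rfl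
      exact ⟨ρ, .inc hρ, hL⟩
    | loop i B K => cases hQ
  | @loop_zero i B K σ τ h0 hK ih =>
    cases P with
    | nil => cases hQ; exact ⟨σ, .nil σ, .loop_zero h0 hK⟩
    | inc i K => cases hQ
    | loop i B K =>
      cases hQ
      obtain ⟨ρ, hρ, hL⟩ := ih rfl
      exact ⟨ρ, .loop_zero h0 hρ, hL⟩
  | @loop_succ i B K σ ρ τ h1 hB hK ihB ih =>
    cases P with
    | nil => cases hQ; exact ⟨σ, .nil σ, .loop_succ h1 hB hK⟩
    | inc i K => cases hQ
    | loop i B K =>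
      cases hQ
      obtain ⟨ρ, hρ, hL⟩ := ih (P := loop i B K) rfl
      exact ⟨ρ, .loop_succ h1 hB hρ, hL⟩

/-- The one-step semantics of programs. -/
def next : LoopProg × (ℕ → ℕ) → Option (LoopProg × (ℕ → ℕ))
  | (nil, _) => none
  | (inc i K, σ) => some (K, Function.update σ i (σ i + 1))
  | (loop i B K, σ) =>
    if σ i = 0 then some (K, σ) else some (B ++ loop i B K, Function.update σ i (σ i - 1))

lemma Run.reaches_append {P : LoopProg} {σ τ : ℕ → ℕ} (h : Run P σ τ) (L : LoopProg) :
    StateTransition.Reaches next (P ++ L, σ) (L, τ) := by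
  induction h generalizing L with
  | nil σ => exact .refl
  | inc _ ih => exact .head rfl (ih L)
  | loop_zero h0 _ ih => exact .head (if_pos h0) (ih L)
  | @loop_succ i B K _ _ _ h1 _ _ ihB ih =>
    refine .head (if_neg h1) ((ihB (loop i B (K ++ L))).trans (ih L))

lemma Run.of_next {s s' : LoopProg × (ℕ → ℕ)} {τ : ℕ → ℕ} (hs : s' ∈ next s)
    (h : Run s'.1 s'.2 τ) : Run s.1 s.2 τ := by
  obtain ⟨_ | ⟨i, K⟩ | ⟨i, B, K⟩, σ⟩ := s
  · cases hs
  · cases hs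
    exact .inc h
  · rw [next, Option.mem_def] at hs
    split_ifs at hs with h0 <;> cases hs
    · exact .loop_zero h0 h
    · obtain ⟨ρ, hB, hρ⟩ := run_append_iff.1 h
      exact .loop_succ h0 hB hρ

lemma append_nil (P : LoopProg) : P ++ nil = P := by
  induction P with
  | nil => rfl
  | inc i K ih => simp [ih]
  | loop i B K _ ih => simp [ih]

lemma exists_run_iff_eval_dom {P : LoopProg} {σ : ℕ → ℕ} :
    (∃ τ, Run P σ τ) ↔ (StateTransition.eval next (P, σ)).Dom := by
  rw [Part.dom_iff_mem]
  constructor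
  · rintro ⟨τ, hτ⟩
    exact ⟨(nil, τ), StateTransition.mem_eval.2 ⟨append_nil P ▸ hτ.reaches_append nil, rfl⟩⟩
  · rintro ⟨s, hs⟩
    obtain ⟨hreach, hhalt⟩ := StateTransition.mem_eval.1 hs
    suffices ∀ s', StateTransition.Reaches next s' s → ∃ τ, Run s'.1 s'.2 τ from this _ hreach
    intro s' h
    induction h using Relation.ReflTransGen.head_induction_on with
    | refl =>
      obtain ⟨P, σ⟩ := s
      cases P with
      | nil => exact ⟨σ, .nil σ⟩
      | inc i K => cases hhalt
      | loop i B K => rw [next] at hhalt; split_ifs at hhalt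
    | head hstep _ ih => exact ih.imp fun τ => .of_next hstep

/-! ### Loop programs compute the partial recursive functions -/

section Macros

variable {σ τ : ℕ → ℕ}

lemma Run.iff_eq {P : LoopProg} {ρ : ℕ → ℕ} (h : Run P σ ρ) : Run P σ τ ↔ τ = ρ :=
  ⟨fun h' => h'.eq h, fun h' => h' ▸ h⟩

lemma Run.append_iff {P L : LoopProg} {ρ : ℕ → ℕ} (h : Run P σ ρ) :
    Run (P ++ L) σ τ ↔ Run L ρ τ := by
  simp [run_append_iff, h.iff_eq]

lemma run_loop_iff {i : ℕ} {B : LoopProg} (S : ℕ → ℕ → ℕ)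
    (hB : ∀ k, Run B (Function.update (S k) i (S k i - 1)) (S (k + 1))) :
    Run (loop i B nil) (S 0) τ ↔ ∃ m, S m i = 0 ∧ (∀ k < m, S k i ≠ 0) ∧ τ = S m := by
  constructor
  · intro h
    generalize hP : loop i B nil = P, hσ : S 0 = σ at h
    induction h generalizing S with
    | nil | inc => cases hP
    | loop_zero h0 hK =>
      cases hP
      cases hσ
      cases hK
      exact ⟨0, h0, by simp, rfl⟩
    | loop_succ h1 hB' _ _ ih =>
      cases hP
      cases hσ
      obtain ⟨m, hm, hlt, rfl⟩ := ih (fun k => S (k + 1)) (fun k => hB _) rfl ((hB 0).eq hB')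
      exact ⟨m + 1, hm, Nat.forall_lt_succ_left.2 ⟨h1, hlt⟩, rfl⟩
  · rintro ⟨m, hm, hlt, rfl⟩
    induction m generalizing S with
    | zero => exact .loop_zero hm (.nil _)
    | succ m ih =>
      rw [Nat.forall_lt_succ_left] at hlt
      exact .loop_succ hlt.1 (hB 0) (ih (fun k => S (k + 1)) (fun k => hB _) hm hlt.2)

lemma run_loop_of_countdown {i N : ℕ} {B : LoopProg} (S : ℕ → ℕ → ℕ) (hS : ∀ k, S k i = N - k)
    (hB : ∀ k, Run B (Function.update (S k) i (S k i - 1)) (S (k + 1))) :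
    Run (loop i B nil) (S 0) (S N) :=
  (run_loop_iff S hB).2 ⟨N, by simp [hS], fun k hk => by rw [hS]; omega, rfl⟩

/-- Set the counter `r` to zero. -/
def clear (r : ℕ) : LoopProg := loop r nil nil

lemma run_clear (r : ℕ) (σ : ℕ → ℕ) : Run (clear r) σ (Function.update σ r 0) := by
  have := run_loop_of_countdown (i := r) (N := σ r) (B := nil)
    (fun k => Function.update σ r (σ r - k)) (by simp) fun k => by
      simpa [Nat.sub_sub] using Run.nil _
  simpa [clear] using this

/-- Add the counter `s` to `d` and clear it. -/
def move (s d : ℕ) : LoopProg := loop s (inc d nil) nil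

lemma run_move {s d : ℕ} (hsd : s ≠ d) (σ : ℕ → ℕ) :
    Run (move s d) σ (Function.update (Function.update σ d (σ d + σ s)) s 0) := by
  have := run_loop_of_countdown (i := s) (N := σ s) (B := inc d nil)
    (fun k => Function.update (Function.update σ d (σ d + k)) s (σ s - k)) (by simp) fun k => by
      refine .inc ?_
      convert Run.nil _ using 1
      grind
  simpa [move] using this

/-- Copy the counter `s` to `d`, through the auxiliary counter `t`. -/
def copy (s d t : ℕ) : LoopProg := loop s (inc d (inc t nil)) nil ++ move t s

lemma run_copy {s d t : ℕ} (hsd : s ≠ d) (hst : s ≠ t) (hdt : d ≠ t) (hd : σ d = 0) (ht : σ t = 0) :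
    Run (copy s d t) σ (Function.update σ d (σ s)) := by
  have hcopy := run_loop_of_countdown (i := s) (N := σ s) (B := inc d (inc t nil))
    (fun k => Function.update (Function.update (Function.update σ d k) t k) s (σ s - k))
    (by simp) fun k => by
      refine .inc (.inc ?_)
      convert Run.nil _ using 1
      grind
  have hmove := hcopy.append (run_move hst.symm _)
  convert hmove using 1 <;> grind [copy]

/-- Clear the `n` counters from `w` on. -/
def clearFrom (w : ℕ) : ℕ → LoopProg
  | 0 => nil
  | n + 1 => clear w ++ clearFrom (w + 1) n

lemma run_clearFrom (w n : ℕ) (σ : ℕ → ℕ) :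
    Run (clearFrom w n) σ fun r => if w ≤ r ∧ r < w + n then 0 else σ r := by
  induction n generalizing w σ with
  | zero =>
    rw [clearFrom]
    convert Run.nil σ using 1
    grind
  | succ n ih =>
    have h := (run_clear w σ).append (ih (w + 1) _)
    rw [clearFrom]
    convert h using 1
    grind

end Macros

/-- `P` computes the partial function `f` of the counters `a i` into the empty counter `d`, using
the empty counters from `w` on as auxiliary storage, which it leaves empty. -/
def Computes {n : ℕ} (P : LoopProg) (f : List.Vector ℕ n →. ℕ) (a : Fin n → ℕ) (d w : ℕ) : Prop :=
  ∀ σ : ℕ → ℕ, σ d = 0 → (∀ r, w ≤ r → σ r = 0) → ∀ τ,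
    Run P σ τ ↔ ∃ y ∈ f (.ofFn fun i => σ (a i)), τ = Function.update σ d y

/-- The functions that loop programs can compute wherever arguments, result and auxiliary storage
are placed. -/
def IsComputable {n : ℕ} (f : List.Vector ℕ n →. ℕ) : Prop :=
  ∀ (a : Fin n → ℕ) (d w : ℕ), (∀ i, a i < w) → (∀ i, a i ≠ d) → d < w → ∃ P, Computes P f a d w

section Total
variable {n : ℕ}

lemma computes_coe_iff {P : LoopProg} {f : List.Vector ℕ n → ℕ} {a : Fin n → ℕ} {d w : ℕ} :
    Computes P f a d w ↔ ∀ σ : ℕ → ℕ, σ d = 0 → (∀ r, w ≤ r → σ r = 0) →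
      Run P σ (Function.update σ d (f (.ofFn fun i => σ (a i)))) := by
  simp only [Computes, PFun.coe_val, Part.mem_some_iff, exists_eq_left]
  exact forall₃_congr fun σ _ _ => ⟨fun h => (h _).2 rfl, fun h τ => h.iff_eq⟩

lemma isComputable_zero : IsComputable (fun _ : List.Vector ℕ n => Part.some 0) := by
  intro a d w _ _ _
  refine ⟨nil, computes_coe_iff.2 fun σ hd _ => ?_⟩
  rw [← hd, Function.update_eq_self]
  exact .nil σ

lemma isComputable_get (i : Fin n) :
    IsComputable fun v : List.Vector ℕ n => Part.some (v.get i) := by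
  intro a d w ha had hdw
  refine ⟨copy (a i) d w, computes_coe_iff.2 fun σ hd hw => ?_⟩
  simpa using run_copy (had i) (ha i).ne hdw.ne hd (hw w le_rfl)

lemma isComputable_succ : IsComputable fun v : List.Vector ℕ 1 => Part.some (v.head + 1) := by
  intro a d w ha had hdw
  refine ⟨copy (a 0) d w ++ inc d nil, computes_coe_iff.2 fun σ hd hw => ?_⟩
  refine (run_copy (had 0) (ha 0).ne hdw.ne hd (hw w le_rfl)).append (.inc ?_)
  simpa using Run.nil _

end Total

section Composition
variable {m n : ℕ}

/-- The counter values that agree with `σ` below `w` and continue with `l` and zeros. -/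
def write (σ : ℕ → ℕ) (w : ℕ) (l : List ℕ) (r : ℕ) : ℕ := if r < w then σ r else l.getD (r - w) 0

lemma write_of_lt {σ : ℕ → ℕ} {w r : ℕ} (h : r < w) (l : List ℕ) : write σ w l r = σ r := if_pos h

lemma write_add (σ : ℕ → ℕ) (w : ℕ) (l : List ℕ) (i : ℕ) : write σ w l (w + i) = l.getD i 0 := by
  simp [write]

lemma write_nil {σ : ℕ → ℕ} {w : ℕ} (hw : ∀ r, w ≤ r → σ r = 0) : write σ w [] = σ := by
  grind [write]

lemma write_update (σ : ℕ → ℕ) (w y : ℕ) (l : List ℕ) :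
    write (Function.update σ w y) (w + 1) l = write σ w (y :: l) := by
  funext r
  rcases lt_trichotomy r w with h | rfl | h
  · simp [write, h, h.ne, Nat.lt_succ_of_lt h]
  · simp [write]
  · obtain ⟨k, rfl⟩ := Nat.exists_eq_add_of_lt h
    simp [write, Nat.add_assoc, Nat.add_sub_add_left]

lemma exists_computes_mOfFn {g : Fin n → List.Vector ℕ m →. ℕ} (hg : ∀ i, IsComputable (g i))
    {a : Fin m → ℕ} {w : ℕ} (ha : ∀ i, a i < w) :
    ∃ P : LoopProg, ∀ σ : ℕ → ℕ, (∀ r, w ≤ r → σ r = 0) → ∀ τ,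
      Run P σ τ ↔ ∃ ys ∈ List.Vector.mOfFn fun i => g i (.ofFn fun j => σ (a j)),
        τ = write σ w ys.toList := by
  induction n generalizing w with
  | zero =>
    refine ⟨nil, fun σ hw τ => ?_⟩
    simp [(Run.nil σ).iff_eq, List.Vector.mOfFn, pure, write_nil hw]
  | succ n ih =>
    obtain ⟨P, hP⟩ := hg 0 a w (w + 1) (fun i => (ha i).trans w.lt_succ_self)
      (fun i => (ha i).ne) w.lt_succ_self
    obtain ⟨Q, hQ⟩ := ih (fun i => hg i.succ) (w := w + 1) fun i => (ha i).trans w.lt_succ_self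
    refine ⟨P ++ Q, fun σ hw τ => ?_⟩
    have hstep : ∀ y, Run Q (Function.update σ w y) τ ↔ ∃ ys ∈
        List.Vector.mOfFn fun i => g (Fin.succ i) (.ofFn fun j => σ (a j)),
        τ = write σ w (y :: ys.toList) := fun y => by
      rw [hQ _ (by grind)]
      simp only [write_update, Function.update_of_ne (ha _).ne]
    simp only [run_append_iff, hP σ (hw w le_rfl) (fun r hr => hw r (by omega))]
    constructor
    · rintro ⟨_, ⟨y, hy, rfl⟩, hτ⟩
      obtain ⟨ys, hys, rfl⟩ := (hstep y).1 hτ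
      exact ⟨y ::ᵥ ys, Part.mem_bind hy (Part.mem_bind hys (Part.mem_some _)), by simp⟩
    · rintro ⟨_, hyys, rfl⟩
      obtain ⟨y, hy, hyys⟩ := Part.mem_bind_iff.1 hyys
      obtain ⟨ys, hys, hyys⟩ := Part.mem_bind_iff.1 hyys
      obtain rfl := Part.mem_some_iff.1 hyys
      exact ⟨_, ⟨y, hy, rfl⟩, (hstep y).2 ⟨ys, hys, by simp⟩⟩

lemma IsComputable.comp {f : List.Vector ℕ n →. ℕ} {g : Fin n → List.Vector ℕ m →. ℕ}
    (hf : IsComputable f) (hg : ∀ i, IsComputable (g i)) :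
    IsComputable fun v => List.Vector.mOfFn (fun i => g i v) >>= f := by
  intro a d w ha _ hdw
  obtain ⟨P, hP⟩ := exists_computes_mOfFn hg ha
  obtain ⟨Q, hQ⟩ := hf (fun i => w + i) d (w + n) (by simp) (by grind) (by omega)
  refine ⟨P ++ (Q ++ clearFrom w n), fun σ hd hw τ => ?_⟩
  have hclear : ∀ (ys : List.Vector ℕ n) y, Run (clearFrom w n)
      (Function.update (write σ w ys.toList) d y) (Function.update σ d y) := fun ys y => by
    convert run_clearFrom w n _ using 1
    grind [write, List.Vector.toList_length]
  have hstep : ∀ ys : List.Vector ℕ n, Run (Q ++ clearFrom w n) (write σ w ys.toList) τ ↔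
      ∃ y ∈ f ys, τ = Function.update σ d y := fun ys => by
    have hargs : List.Vector.ofFn (fun i : Fin n => write σ w ys.toList (w + i)) = ys :=
      List.Vector.ext fun i => by simp [write_add, List.Vector.get_eq_get_toList]
    simp only [run_append_iff, hQ (write σ w ys.toList) ((write_of_lt hdw _).trans hd)
      (by grind [write, List.Vector.toList_length]), hargs]
    exact ⟨fun ⟨_, ⟨y, hy, hρ⟩, h⟩ => ⟨y, hy, (hclear ys y).iff_eq.1 (hρ ▸ h)⟩,
      fun ⟨y, hy, hτ⟩ => ⟨_, ⟨y, hy, rfl⟩, hτ ▸ hclear ys y⟩⟩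
  rw [run_append_iff]
  simp only [hP σ hw]
  constructor
  · rintro ⟨_, ⟨ys, hys, rfl⟩, h⟩
    obtain ⟨y, hy, hτ⟩ := (hstep ys).1 h
    exact ⟨y, Part.mem_bind hys hy, hτ⟩
  · rintro ⟨y, hy, hτ⟩
    obtain ⟨ys, hys, hy⟩ := Part.mem_bind_iff.1 hy
    exact ⟨_, ⟨ys, hys, rfl⟩, (hstep ys).2 ⟨y, hy, hτ⟩⟩

end Composition

section Recursion
variable {n : ℕ}

/-- One round of the loop for a primitive recursion: the counter `d` holds the current value and `w`
the number of the round. -/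
def precBody (G : LoopProg) (d w : ℕ) : LoopProg :=
  G ++ (clear d ++ (move (w + 1) d ++ inc w nil))

lemma Computes.run_precBody {g : List.Vector ℕ (n + 2) → ℕ} {a : Fin n → ℕ} {d w : ℕ}
    {G : LoopProg} (hG : Computes G g (Fin.cons w (Fin.cons d a)) (w + 1) (w + 2)) (hdw : d < w)
    {σ : ℕ → ℕ} (hσ : ∀ r, w < r → σ r = 0) :
    Run (precBody G d w) σ (Function.update
      (Function.update σ d (g (σ w ::ᵥ σ d ::ᵥ .ofFn fun i => σ (a i)))) w (σ w + 1)) := by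
  have h := computes_coe_iff.1 hG σ (by grind) (by grind)
  simp only [List.Vector.ofFn, Fin.cons_zero, Fin.cons_succ] at h
  rw [precBody]
  convert h.append ((run_clear d _).append ((run_move (by omega : w + 1 ≠ d) _).append
    (.inc (i := w) (.nil _)))) using 1
  have : σ (w + 1) = 0 := hσ _ (by omega)
  funext r
  simp only [Function.update_apply]
  grind

lemma IsComputable.prec {f : List.Vector ℕ n → ℕ} {g : List.Vector ℕ (n + 2) → ℕ}
    (hf : IsComputable (f : List.Vector ℕ n →. ℕ))
    (hg : IsComputable (g : List.Vector ℕ (n + 2) →. ℕ)) :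
    IsComputable ((fun v : List.Vector ℕ (n + 1) =>
      v.head.rec (f v.tail) fun y IH => g (y ::ᵥ IH ::ᵥ v.tail) :
        List.Vector ℕ (n + 1) → ℕ) : List.Vector ℕ (n + 1) →. ℕ) := by
  intro a d w ha had hdw
  obtain ⟨F, hF⟩ := hf (fun i => a i.succ) d (w + 1) (by grind) (by grind) (by grind)
  obtain ⟨G, hG⟩ := hg (Fin.cons (w + 1) (Fin.cons d fun i => a i.succ)) (w + 2) (w + 3)
    (by simp [Fin.forall_fin_succ]; grind) (by simp [Fin.forall_fin_succ]; grind) (by grind)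
  rw [computes_coe_iff] at hF
  refine ⟨copy (a 0) w (w + 1) ++ (F ++ (loop w (precBody G d (w + 1)) nil ++ clear (w + 1))),
    computes_coe_iff.2 fun σ hd hw => ?_⟩
  generalize hv : List.Vector.ofFn (fun i => σ (a i.succ)) = v
  obtain ⟨R, hR⟩ : ∃ R : ℕ → ℕ, ∀ k : ℕ, R k = k.rec (f v) fun y IH => g (y ::ᵥ IH ::ᵥ v) :=
    ⟨_, fun _ => rfl⟩
  have hR0 : R 0 = f v := hR 0
  have hRS (k : ℕ) : R (k + 1) = g (k ::ᵥ R k ::ᵥ v) := by simp only [hR]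
  let S k := Function.update (Function.update (Function.update σ d (R k)) w (σ (a 0) - k)) (w + 1) k
  have hcopy := run_copy (ha 0).ne (by grind) (by omega) (hw w le_rfl) (hw (w + 1) (by omega))
  have hbase : Run F (Function.update σ w (σ (a 0))) (S 0) := by
    have h := hF (Function.update σ w (σ (a 0))) (by grind) (by grind)
    simp only [Function.update_of_ne (ha _).ne, hv, ← hR0] at h
    convert h using 1
    grind
  have hbody (k : ℕ) : Run (precBody G d (w + 1)) (Function.update (S k) w (S k w - 1))
      (S (k + 1)) := by
    convert hG.run_precBody (by omega) (σ := Function.update (S k) w (S k w - 1)) (by grind) using 1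
    have hargs (i : Fin n) : Function.update (S k) w (S k w - 1) (a i.succ) = σ (a i.succ) := by
      grind
    simp only [hargs, hv, S, hRS]
    grind
  have hloop := run_loop_of_countdown (N := σ (a 0)) S (by simp [S]) hbody
  suffices h : Run _ σ (Function.update σ d (R (σ (a 0)))) by
    rw [hR, ← hv] at h
    exact h
  convert hcopy.append (hbase.append (hloop.append (run_clear (w + 1) _))) using 1
  have : σ (w + 1) = 0 := hw _ (by omega)
  funext r
  simp only [S, Function.update_apply]
  grind

lemma IsComputable.rfind {f : List.Vector ℕ (n + 1) → ℕ}
    (hf : IsComputable (f : List.Vector ℕ (n + 1) →. ℕ)) :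
    IsComputable fun v => Nat.rfind fun k => Part.some (f (k ::ᵥ v) = 0 : Bool) := by
  intro a d w ha had hdw
  obtain ⟨F, hF⟩ := hf (Fin.cons d a) w (w + 1) (by simp [Fin.forall_fin_succ]; grind)
    (by simp [Fin.forall_fin_succ]; grind) (by grind)
  rw [computes_coe_iff] at hF
  refine ⟨F ++ (loop w (clear w ++ inc d F) nil), fun σ hd hw τ => ?_⟩
  generalize hv : List.Vector.ofFn (fun i => σ (a i)) = v
  let S k := Function.update (Function.update σ d k) w (f (k ::ᵥ v))
  have hSF (k : ℕ) : Run F (Function.update σ d k) (S k) := by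
    convert hF (Function.update σ d k) (by grind) (by grind) using 1
    simp [S, ← hv, List.Vector.ofFn, Function.update_of_ne (had _)]
  have hbody (k : ℕ) : Run (clear w ++ inc d F) (Function.update (S k) w (S k w - 1))
      (S (k + 1)) := by
    refine (run_clear w _).append (.inc ?_)
    convert hSF (k + 1) using 1
    grind
  have hinit : Run F σ (S 0) := by simpa [← hd] using hSF 0
  have hSw (k : ℕ) : S k w = f (k ::ᵥ v) := Function.update_self ..
  have hSzero {k : ℕ} (hk : f (k ::ᵥ v) = 0) : S k = Function.update σ d k := by grind
  have hmem (m : ℕ) : m ∈ Nat.rfind (fun k => Part.some (f (k ::ᵥ v) = 0 : Bool)) ↔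
      f (m ::ᵥ v) = 0 ∧ ∀ k < m, f (k ::ᵥ v) ≠ 0 := Nat.mem_rfind.trans (by simp)
  simp only [hinit.append_iff, run_loop_iff S hbody, hSw, hmem, and_assoc]
  exact exists_congr fun m => and_congr_right fun hm => by rw [hSzero hm]

end Recursion

lemma isComputable_of_partrec' {n : ℕ} {f : List.Vector ℕ n →. ℕ} (hf : Nat.Partrec' f) :
    IsComputable f := by
  induction hf with
  | prim hf =>
    induction hf with
    | zero => exact isComputable_zero
    | succ => exact isComputable_succ
    | get i => exact isComputable_get i
    | comp g _ _ ihf ihg =>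
      refine (congrArg IsComputable (funext fun v => ?_)).mp (ihf.comp ihg)
      simp only [PFun.coe_val, Vector.mOfFn_part_some]
      exact Part.bind_some _ _
    | prec _ _ ihf ihg => exact ihf.prec ihg
  | comp g _ _ ihf ihg => exact ihf.comp ihg
  | rfind _ ih => exact ih.rfind

end LoopProg

namespace CMCode

/-- The counter machine with the code `c`. -/
abbrev machine (c : CMCode) : CounterMachine := decodeCM c.1 c.2.1 c.2.2.1 c.2.2.2

/-- The instruction of the code `c` at the state `q`. -/
def instr (c : CMCode) (q : ℕ) : Option ((ℕ × ℕ) ⊕ (ℕ × ℕ × ℕ)) := c.2.2.2.getD q none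

section δ
variable {c : CMCode} {q : Fin (c.2.1 + 1)} {i t t' : ℕ}

lemma δ_none (h : c.instr q = none) : c.machine.δ q = none := by
  obtain ⟨n, s, q₀, tbl⟩ := c
  simp only [machine, decodeCM, show tbl.getD q none = none from h]

lemma δ_inc (h : c.instr q = some (.inl (i, t))) : c.machine.δ q =
    if hi : i < c.1 then some (.inc ⟨i, hi⟩ (Fin.ofNat (c.2.1 + 1) t)) else none := by
  obtain ⟨n, s, q₀, tbl⟩ := c
  simp only [machine, decodeCM, show tbl.getD q none = some (.inl (i, t)) from h, Fin.ofNat]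

lemma δ_dec (h : c.instr q = some (.inr (i, t, t'))) : c.machine.δ q =
    if hi : i < c.1 then
      some (.dec ⟨i, hi⟩ (Fin.ofNat (c.2.1 + 1) t) (Fin.ofNat (c.2.1 + 1) t'))
    else none := by
  obtain ⟨n, s, q₀, tbl⟩ := c
  simp only [machine, decodeCM, show tbl.getD q none = some (.inr (i, t, t')) from h, Fin.ofNat]

end δ

end CMCode

namespace CMmatrix
variable {C : CounterMachine}

lemma isReachable_iff_reaches {cfg : Config C} :
    IsReachable C cfg ↔ StateTransition.Reaches (nextConf C) (C.qinit, fun _ => 0) cfg := by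
  constructor
  · rintro ⟨k, hk⟩
    induction k generalizing cfg with
    | zero => cases hk; exact .refl
    | succ k ih =>
      obtain ⟨cfg', hk', hnext⟩ := Option.bind_eq_some_iff.1 hk
      exact (ih hk').tail hnext
  · intro h
    induction h with
    | refl => exact isReachable_init
    | tail _ hnext ih => exact ih.next hnext

lemma halting_iff_nextConf_eq_none {cfg : Config C} : Halting C cfg ↔ nextConf C cfg = none := by
  rw [Halting, nextConf]
  split <;> grind

lemma halts_iff_eval_dom : cmHaltsFromZero C ↔
    (StateTransition.eval (nextConf C) (C.qinit, fun _ => 0)).Dom := by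
  rw [cmHaltsFromZero, exists_comm, Part.dom_iff_mem]
  refine exists_congr fun cfg => ?_
  rw [exists_and_right, halting_iff_nextConf_eq_none]
  exact (and_congr_left' isReachable_iff_reaches).trans StateTransition.mem_eval.symm

/-- `C.δ q` is the first instruction of the program `ℓ q`, and leads to the states whose programs
are the possible remaining ones. -/
def Implements (C : CounterMachine) (ℓ : C.Q → LoopProg) : Prop :=
  ∀ q, match ℓ q with
    | .nil => C.δ q = none
    | .inc i K => ∃ (h : i < C.n) (q' : C.Q), ℓ q' = K ∧ C.δ q = some (.inc ⟨i, h⟩ q')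
    | .loop i B K => ∃ (h : i < C.n) (q' q'' : C.Q), ℓ q' = B ++ .loop i B K ∧ ℓ q'' = K ∧
        C.δ q = some (.dec ⟨i, h⟩ q' q'')

lemma Implements.respects {ℓ : C.Q → LoopProg} (h : Implements C ℓ) :
    StateTransition.Respects LoopProg.next (nextConf C) fun s cfg =>
      ℓ cfg.1 = s.1 ∧ ∀ i : Fin C.n, cfg.2 i = s.2 i := by
  rintro ⟨P, σ⟩ ⟨q, x⟩ ⟨rfl, hx⟩
  change ∀ i : Fin C.n, x i = σ i at hx
  have hq := h q
  rcases hP : ℓ q with _ | ⟨i, K⟩ | ⟨i, B, K⟩ <;> rw [hP] at hq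
  · simp [LoopProg.next, nextConf, hq]
  · obtain ⟨hi, q', rfl, hδ⟩ := hq
    refine ⟨(q', Function.update x ⟨i, hi⟩ (x ⟨i, hi⟩ + 1)), ⟨rfl, fun j => ?_⟩,
      .single (Option.mem_def.2 (by simp [nextConf, hδ]))⟩
    simp [Function.update_apply, hx, Fin.ext_iff]
  · obtain ⟨hi, q', q'', hq', rfl, hδ⟩ := hq
    have hx0 : x ⟨i, hi⟩ = σ i := hx _
    rw [LoopProg.next]
    split_ifs with h0
    · exact ⟨(q'', x), ⟨rfl, hx⟩, .single (Option.mem_def.2 (by simp [nextConf, hδ, hx0, h0]))⟩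
    · refine ⟨(q', Function.update x ⟨i, hi⟩ (x ⟨i, hi⟩ - 1)), ⟨hq', fun j => ?_⟩,
        .single (Option.mem_def.2 (by simp [nextConf, hδ, hx0, h0]))⟩
      simp [Function.update_apply, hx, Fin.ext_iff]

lemma Implements.halts_iff {ℓ : C.Q → LoopProg} (h : Implements C ℓ) :
    cmHaltsFromZero C ↔ ∃ τ, LoopProg.Run (ℓ C.qinit) (fun _ => 0) τ := by
  rw [LoopProg.exists_run_iff_eval_dom, halts_iff_eval_dom]
  exact StateTransition.tr_eval_dom h.respects ⟨rfl, fun _ => rfl⟩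

end CMmatrix

namespace LoopProg

lemma exists_run_iff_dom {f : ℕ →. ℕ} (hf : Nat.Partrec f) :
    ∃ P, ∀ N, (∃ τ, Run P (Pi.single 0 N) τ) ↔ (f N).Dom := by
  obtain ⟨P, hP⟩ := isComputable_of_partrec' (Nat.Partrec'.part_iff₁.2 (Partrec.nat_iff.2 hf))
    (fun _ => 0) 1 2 (by simp) (by simp) (by simp)
  refine ⟨P, fun N => ?_⟩
  have hrun := hP (Pi.single 0 N) (by simp) fun r hr => by grind
  simp only [Pi.single_eq_same, List.Vector.head_ofFn] at hrun
  simp only [hrun, Part.dom_iff_mem]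
  exact ⟨fun ⟨_, y, hy, _⟩ => ⟨y, hy⟩, fun ⟨y, hy⟩ => ⟨_, y, hy, rfl⟩⟩

lemma run_iterate_inc_iff {P : LoopProg} {i N : ℕ} {σ τ : ℕ → ℕ} :
    Run ((inc i)^[N] P) σ τ ↔ Run P (Function.update σ i (σ i + N)) τ := by
  induction N generalizing σ with
  | zero => simp
  | succ N ih =>
    have ih' := ih (σ := Function.update σ i (σ i + 1))
    rw [Function.update_self, Function.update_idem, add_assoc, add_comm 1 N] at ih'
    rw [Function.iterate_succ_apply', ← ih']
    exact ⟨fun (.inc h) => h, .inc⟩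

/-- The programs that may remain during an execution, including the program itself. -/
def residuals : LoopProg → List LoopProg
  | nil => [nil]
  | inc i K => inc i K :: residuals K
  | loop i B K => loop i B K :: (residuals K ++ (residuals B).map (· ++ loop i B K))

/-- The programs that may remain after one step. -/
def succs : LoopProg → List LoopProg
  | nil => []
  | inc _ K => [K]
  | loop i B K => [B ++ loop i B K, K]

lemma self_mem_residuals (P : LoopProg) : P ∈ residuals P := by
  cases P <;> simp [residuals]

lemma succs_append {P : LoopProg} (hP : P ≠ nil) (L : LoopProg) :
    succs (P ++ L) = (succs P).map (· ++ L) := by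
  cases P <;> simp_all [succs, append_assoc]

lemma mem_residuals_of_mem_succs {P Q R : LoopProg} (hQ : Q ∈ residuals P) (hR : R ∈ succs Q) :
    R ∈ residuals P := by
  induction P generalizing Q R with
  | nil =>
    obtain rfl := List.mem_singleton.1 hQ
    simp [succs] at hR
  | inc i K ih =>
    obtain rfl | hQ := List.mem_cons.1 hQ
    · obtain rfl := List.mem_singleton.1 hR
      exact .tail _ (self_mem_residuals _)
    · exact .tail _ (ih hQ hR)
  | loop i B K ihB ihK =>
    have hself : ∀ R ∈ succs (loop i B K), R ∈ residuals (loop i B K) := by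
      simp only [succs, residuals, List.forall_mem_cons]
      grind [self_mem_residuals]
    rw [residuals, List.mem_cons, List.mem_append, List.mem_map] at hQ
    obtain rfl | hQ | ⟨Q, hQ, rfl⟩ := hQ
    · exact hself R hR
    · exact .tail _ (List.mem_append_left _ (ihK hQ hR))
    · obtain rfl | hne := eq_or_ne Q nil
      · exact hself R hR
      · rw [succs_append hne, List.mem_map] at hR
        obtain ⟨R, hR, rfl⟩ := hR
        exact .tail _ (List.mem_append_right _ (List.mem_map_of_mem (ihB hQ hR)))

/-- The transition table entry for the first instruction of a program, the state for a remaining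
program being its position in `S`. -/
def entry (S : List LoopProg) : LoopProg → Option ((ℕ × ℕ) ⊕ (ℕ × ℕ × ℕ))
  | nil => none
  | inc i K => some (.inl (i, S.idxOf K))
  | loop i B K => some (.inr (i, S.idxOf (B ++ loop i B K), S.idxOf K))

/-- The counter of the first instruction (`0` if there is none). -/
def counter : LoopProg → ℕ
  | nil => 0
  | inc i _ => i
  | loop i _ _ => i

/-- The number of counters needed to execute `P`. -/
def width (P : LoopProg) : ℕ := ((residuals P).map counter).sum + 1

/-- A code of a counter machine that executes `P` after setting the counter `0` to `N`: the states
below `(residuals P).length` stand for the residuals of `P`, the state `(residuals P).length + k`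
for the program `(inc 0)^[k] P`. -/
def machineCode (P : LoopProg) (N : ℕ) : CMCode :=
  let S := residuals P
  (width P, S.length + N, S.length + N,
    S.map (entry S) ++ entry S P :: (List.range N).map fun k => some (.inl (0, S.length + k)))

/-- The program for which a state of `machineCode P N` stands. -/
def stateProg (P : LoopProg) (q : ℕ) : LoopProg :=
  if h : q < (residuals P).length then (residuals P)[q] else (inc 0)^[q - (residuals P).length] P

lemma stateProg_idxOf_mod {P Q : LoopProg} (N : ℕ) (hQ : Q ∈ residuals P) :
    stateProg P ((residuals P).idxOf Q % ((residuals P).length + N + 1)) = Q := by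
  have hlt := List.idxOf_lt_length_of_mem hQ
  rw [Nat.mod_eq_of_lt (by omega)]
  simp [stateProg, hlt]

lemma counter_lt_width {P Q : LoopProg} (hQ : Q ∈ residuals P) : counter Q < width P :=
  Nat.lt_succ_of_le (List.le_sum_of_mem (List.mem_map_of_mem hQ))

lemma primrec_machineCode (P : LoopProg) : Primrec (machineCode P) := by
  have hlen : Primrec fun N : ℕ => (residuals P).length + N :=
    Primrec.nat_add.comp (.const _) .id
  refine .pair (.const _) (hlen.pair (hlen.pair ?_))
  refine Primrec.list_append.comp (.const _) (Primrec.list_cons.comp (.const _)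
    (Primrec.list_map .list_range ?_))
  exact Primrec.option_some.comp (Primrec.sumInl.comp (.pair (.const _)
    (Primrec.nat_add.comp (.const _) .snd)))

lemma instr_machineCode {P : LoopProg} {N q : ℕ} (hq : q ≤ (residuals P).length + N) :
    (stateProg P q ∈ residuals P ∧
      (machineCode P N).instr q = entry (residuals P) (stateProg P q)) ∨
    ∃ k, stateProg P q = inc 0 (stateProg P ((residuals P).length + k)) ∧
      k < N ∧ (machineCode P N).instr q = some (.inl (0, (residuals P).length + k)) := by
  rw [CMCode.instr, machineCode]
  obtain hlt | hle := lt_or_ge q (residuals P).length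
  · left
    rw [List.getD_append _ _ _ _ (by simpa)]
    simp [stateProg, hlt]
  obtain ⟨k, rfl⟩ := Nat.exists_eq_add_of_le hle
  rw [List.getD_append_right _ _ _ _ (by simp), List.length_map, Nat.add_sub_cancel_left]
  cases k with
  | zero => exact .inl (by simp [stateProg, self_mem_residuals])
  | succ k =>
    have hk : k < N := by omega
    exact .inr ⟨k, by simp [stateProg, Function.iterate_succ_apply'], hk, by simp [hk]⟩

lemma implements_machine (P : LoopProg) (N : ℕ) :
    CMmatrix.Implements (machineCode P N).machine fun q => stateProg P q.val := by
  intro (q : Fin _)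
  dsimp only
  obtain ⟨hmem, hq⟩ | ⟨k, hprog, hk, hq⟩ := instr_machineCode (Nat.le_of_lt_succ q.2)
  · have hsuccs := fun R => mem_residuals_of_mem_succs (R := R) hmem
    have hcounter := counter_lt_width hmem
    rcases hP : stateProg P q with _ | ⟨i, K⟩ | ⟨i, B, K⟩ <;> rw [hP] at hq hsuccs hcounter
    · exact CMCode.δ_none hq
    · exact ⟨hcounter, _, stateProg_idxOf_mod N (hsuccs K (by simp [succs])),
        (CMCode.δ_inc hq).trans (dif_pos hcounter)⟩
    · exact ⟨hcounter, _, _, stateProg_idxOf_mod N (hsuccs (B ++ loop i B K) (by simp [succs])),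
        stateProg_idxOf_mod N (hsuccs K (by simp [succs])),
        (CMCode.δ_dec hq).trans (dif_pos hcounter)⟩
  · have hmod : (Fin.ofNat ((residuals P).length + N + 1) ((residuals P).length + k)).val =
        (residuals P).length + k := Nat.mod_eq_of_lt (by omega)
    rw [hprog]
    exact ⟨Nat.succ_pos _, _, congrArg (stateProg P) hmod, 
      (CMCode.δ_inc hq).trans (dif_pos (Nat.succ_pos _))⟩

lemma haltProblem_machineCode_iff {P : LoopProg} {N : ℕ} :
    haltProblem (machineCode P N) ↔ ∃ τ, Run P (Pi.single 0 N) τ := by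
  have hinit : (machineCode P N).machine.qinit.val = (residuals P).length + N :=
    Nat.mod_eq_of_lt (Nat.lt_succ_self _)
  refine (implements_machine P N).halts_iff.trans (exists_congr fun τ => ?_)
  rw [hinit, stateProg, dif_neg (by omega), Nat.add_sub_cancel_left, run_iterate_inc_iff,
    Nat.zero_add]
  rfl

end LoopProg

theorem not_computablePred_haltProblem : ¬ ComputablePred haltProblem := by
  intro h
  obtain ⟨P, hP⟩ := LoopProg.exists_run_iff_dom (Partrec.nat_iff.1
    (Nat.Partrec.Code.eval_part.comp (Computable.ofNat Nat.Partrec.Code) (Computable.const 0)))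
  refine ComputablePred.halting_problem 0 (ComputablePred.computable_of_manyOneReducible
    ⟨fun c => LoopProg.machineCode P (Encodable.encode c),
      ((LoopProg.primrec_machineCode P).comp Primrec.encode).to_comp, fun c => ?_⟩ h)
  rw [LoopProg.haltProblem_machineCode_iff, hP, Denumerable.ofNat_encode]

/-! ### Maps and codes of Nmatrices -/

namespace NMatrix

lemma exists_entails_of_hom {S S' : Signature} {V V' : Type} {M : NMatrix S V}
    {M' : NMatrix S' V'} (κ : S.Conn → S'.Conn) (hκ : ∀ c, S.arity c = S'.arity (κ c))
    (f : V' → V) (hf : ∀ c (a : Fin (S'.arity (κ c)) → V'), ∀ x ∈ M'.interp (κ c) a,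
      f x ∈ M.interp c fun i => f (a (Fin.cast (hκ c) i)))
    (hD : ∀ x, f x ∈ M.D → x ∈ M'.D) :
    (∃ A, Entails M ∅ A) → ∃ A, Entails M' ∅ A := by
  let tr : Fm S → Fm S' := Fm.rec .var fun c _ t => .app (κ c) fun i => t (Fin.cast (hκ c).symm i)
  rintro ⟨A, hA⟩
  refine ⟨tr A, fun v hv _ => hD _ (hA (fun B => f (v (tr B))) (fun c args => ?_) (by simp))⟩
  exact hf c (fun i => v (tr (args (Fin.cast (hκ c).symm i)))) _ (hv _ _)

lemma exists_entails_iff_of_surjective {S S' : Signature} {V V' : Type} {M : NMatrix S V}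
    {M' : NMatrix S' V'} {κ : S.Conn → S'.Conn} (hκ : Function.Surjective κ)
    (har : ∀ c, S.arity c = S'.arity (κ c)) {f : V' → V} (hf : Function.Surjective f)
    (hinterp : ∀ c (a : Fin (S'.arity (κ c)) → V') x,
      x ∈ M'.interp (κ c) a ↔ f x ∈ M.interp c fun i => f (a (Fin.cast (har c) i)))
    (hD : ∀ x, x ∈ M'.D ↔ f x ∈ M.D) :
    (∃ A, Entails M ∅ A) ↔ ∃ A, Entails M' ∅ A := by
  refine ⟨exists_entails_of_hom κ har f (fun c a x => (hinterp c a x).1) fun x => (hD x).2, ?_⟩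
  obtain ⟨g, hg⟩ := hf.hasRightInverse
  obtain ⟨ρ, hρ⟩ := hκ.hasRightInverse
  have har' : ∀ c, S'.arity c = S.arity (ρ c) := fun c => by rw [har, hρ]
  refine exists_entails_of_hom ρ har' g (fun c a x hx => ?_)
    fun x hx => by simpa [hD, hg x] using hx
  have hsection : ∀ c' (_ : κ (ρ c) = c') (e : S'.arity c' = S.arity (ρ c)),
      g x ∈ M'.interp c' fun i => g (a (Fin.cast e i)) := by
    rintro _ rfl e
    simpa [hinterp, hg _] using hx
  exact hsection c (hρ c) (har' c)

end NMatrix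

/-- The `k`-th digit of `x` in base `b`. -/
def digit (b k x : ℕ) : ℕ := x / b ^ k % b

lemma digit_lt {b : ℕ} (hb : 0 < b) (k x : ℕ) : digit b k x < b := Nat.mod_lt _ hb

lemma digit_sum {b n : ℕ} (a : Fin n → Fin b) (i : Fin n) :
    digit b i (∑ j, (a j : ℕ) * b ^ (j : ℕ)) = a i :=
  congrArg Fin.val (congrFun (finFunctionFinEquiv.symm_apply_apply a) i)

section primrec
variable {α β : Type} [Primcodable α] [Primcodable β]

lemma primrecPred_exists_mem {l : α → List β} {p : α → β → Prop} (hl : Primrec l)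
    (hp : PrimrecPred fun x : α × β => p x.1 x.2) : PrimrecPred fun a => ∃ b ∈ l a, p a b :=
  (PrimrecRel.exists_mem_list (R := fun b a => p a b) (hp.comp (.pair .snd .fst))).comp hl .id

lemma primrecPred_forall_lt {m : α → ℕ} {p : α → ℕ → Prop} (hm : Primrec m)
    (hp : PrimrecPred fun x : α × ℕ => p x.1 x.2) : PrimrecPred fun a => ∀ i < m a, p a i :=
  ((PrimrecRel.forall_mem_list (R := fun i a => p a i) (hp.comp (.pair .snd .fst))).comp
    (Primrec.list_range.comp hm) .id).of_eq (by simp)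

lemma primrec_pow : Primrec₂ ((· ^ ·) : ℕ → ℕ → ℕ) := Primrec₂.unpaired'.1 Nat.Primrec.pow

lemma primrec_digit {b k x : α → ℕ} (hb : Primrec b) (hk : Primrec k) (hx : Primrec x) :
    Primrec fun a => digit (b a) (k a) (x a) :=
  Primrec.nat_mod.comp (Primrec.nat_div.comp hx (primrec_pow.comp hb hk)) hb

end primrec

namespace NMatCode

open Classical in
/-- The tables of the interpretations on the truth-values `0, …, m`: the entry of the connective `j`
at a position `k` lists the values `w` with `R j k w`. -/
noncomputable def tabulate (ar : List ℕ) (m : ℕ) (R : ℕ → ℕ → ℕ → Prop) :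
    List (List (List ℕ)) :=
  (List.range ar.length).map fun j => (List.range ((m + 1) ^ ar.getD j 0)).map fun k =>
    (List.range (m + 1)).filter fun w => R j k w

lemma mem_interp_tabulate_iff {ar : List ℕ} {m : ℕ} {R : ℕ → ℕ → ℕ → Prop} {ds : List ℕ}
    {j : Fin ar.length} {a : Fin (ar.get j) → Fin (m + 1)} {x : Fin (m + 1)} :
    x ∈ (decodeNMat ar m (tabulate ar m R) ds).interp j a ↔
      R j (∑ i, (a i : ℕ) * (m + 1) ^ (i : ℕ)) x ∨
        x = 0 ∧ ∀ y : Fin (m + 1), ¬ R j (∑ i, (a i : ℕ) * (m + 1) ^ (i : ℕ)) y := by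
  have hk : ∑ i, (a i : ℕ) * (m + 1) ^ (i : ℕ) < (m + 1) ^ ar[(j : ℕ)] := (finFunctionFinEquiv a).2
  simp only [decodeNMat]
  generalize ∑ i, (a i : ℕ) * (m + 1) ^ (i : ℕ) = k at hk ⊢
  have hrow (y : Fin (m + 1)) :
      (y : ℕ) ∈ ((tabulate ar m R).getD j []).getD k [] ↔ R j k y := by
    simp [tabulate, hk, y.is_lt]
  split_ifs with h <;> simp only [hrow] at h ⊢
  · exact (or_iff_left_of_imp fun h' => absurd h (not_exists.2 h'.2)).symm
  · simp [not_exists.1 h]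

lemma primrec_tabulate {α : Type} [Primcodable α] {ar : α → List ℕ} {m : α → ℕ}
    {R : α → ℕ → ℕ → ℕ → Prop} (har : Primrec ar) (hm : Primrec m)
    (hR : PrimrecPred fun p : ℕ × α × ℕ × ℕ => R p.2.1 p.2.2.1 p.2.2.2 p.1) :
    Primrec fun a => tabulate (ar a) (m a) (R a) := by
  classical
  have hrow : Primrec fun p : α × ℕ × ℕ =>
      (List.range (m p.1 + 1)).filter fun w => R p.1 p.2.1 p.2.2 w :=
    (PrimrecRel.listFilter (R := fun w (p : α × ℕ × ℕ) => R p.1 p.2.1 p.2.2 w) hR).comp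
      (Primrec.list_range.comp (Primrec.succ.comp (hm.comp .fst))) .id
  refine Primrec.list_map (Primrec.list_range.comp (Primrec.list_length.comp har)) ?_
  refine Primrec.list_map (Primrec.list_range.comp (primrec_pow.comp
    (Primrec.succ.comp (hm.comp .fst)) ((Primrec.list_getD 0).comp (har.comp .fst) .snd))) ?_
  exact hrow.comp (.pair (Primrec.fst.comp .fst) (.pair (Primrec.snd.comp .fst) .snd))

end NMatCode

/-! ### The code of the Nmatrix induced by a counter machine -/

namespace CMCode

section moves
variable {c : CMCode}

/-- The possible effects of an instruction: `(0, i, t)` for an increment, `(1, i, t)` for a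
decrement and `(2, i, t)` for a zero test of the counter `i`, with the next state `t`. -/
def moves : Option ((ℕ × ℕ) ⊕ (ℕ × ℕ × ℕ)) → List (ℕ × ℕ × ℕ)
  | none => []
  | some (.inl (i, t)) => [(0, i, t)]
  | some (.inr (i, t, t')) => [(1, i, t), (2, i, t')]

/-- The effects at the state `q` on the counters that exist. -/
def movesAt (c : CMCode) (q : ℕ) : List (ℕ × ℕ × ℕ) :=
  (moves (c.instr q)).filter fun e => e.2.1 < c.1

lemma movesAt_eq_nil_iff {q : Fin (c.2.1 + 1)} : c.movesAt q = [] ↔ c.machine.δ q = none := by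
  rcases h : c.instr q with _ | ⟨i, t⟩ | ⟨i, t, t'⟩
  · simp [movesAt, h, moves, δ_none h]
  · rw [δ_inc h]
    by_cases hi : i < c.1 <;> simp [movesAt, h, moves, hi]
  · rw [δ_dec h]
    by_cases hi : i < c.1 <;> simp [movesAt, h, moves, hi]

/-- The abstract number with the code `a`, which is a digit in base `4`. -/
def toNum : ℕ → CMNum
  | 0 => .r0
  | 1 => .ge0
  | 2 => .ge1
  | _ => .ge2

lemma toNum_inj {a b : ℕ} (ha : a < 4) (hb : b < 4) : toNum a = toNum b ↔ a = b := by
  interval_cases a <;> interval_cases b <;> simp [toNum]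

/-- The triples `(k, a, b)` such that an effect of kind `k` can change the abstract number `a` of
its counter into `b`. -/
def numMoves : List (ℕ × ℕ × ℕ) :=
  [(0, 0, 2), (0, 1, 1), (0, 1, 2), (0, 2, 3), (0, 3, 3),
    (1, 2, 0), (1, 1, 1), (1, 2, 1), (1, 3, 2), (1, 3, 3), (2, 0, 0), (2, 1, 1)]

lemma mem_numMoves_zero {a b : ℕ} (ha : a < 4) (hb : b < 4) :
    (0, a, b) ∈ numMoves ↔ toNum b ∈ succNum (toNum a) := by
  interval_cases a <;> interval_cases b <;> simp [numMoves, toNum, succNum]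

lemma mem_numMoves_one {a b : ℕ} (ha : a < 4) (hb : b < 4) :
    (1, a, b) ∈ numMoves ↔ toNum a ∈ succNum (toNum b) := by
  interval_cases a <;> interval_cases b <;> simp [numMoves, toNum, succNum]

lemma mem_numMoves_two {a b : ℕ} (ha : a < 4) (hb : b < 4) :
    (2, a, b) ∈ numMoves ↔ toNum a ∈ zeroNum ∧ b = a := by
  interval_cases a <;> interval_cases b <;> simp [numMoves, toNum, zeroNum]

lemma abstractStep_iff {q q' : Fin (c.2.1 + 1)} {y z : ℕ → ℕ} (hy : ∀ i, y i < 4)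
    (hz : ∀ i, z i < 4) :
    CMmatrix.AbstractStep (C := c.machine) q (fun i => toNum (y i)) (fun i => toNum (z i))
        (c.machine.δ q') ↔
      ∃ e ∈ c.movesAt q', e.2.2 % (c.2.1 + 1) = q.val ∧ (e.1, y e.2.1, z e.2.1) ∈ numMoves ∧
        ∀ l < c.1, l ≠ e.2.1 → z l = y l := by
  have hinj : ∀ l, toNum (z l) = toNum (y l) ↔ z l = y l := fun l => toNum_inj (hz l) (hy l)
  have hframe {i : ℕ} (hi : i < c.1) :
      (∀ l : Fin c.1, l ≠ ⟨i, hi⟩ → toNum (z l) = toNum (y l)) ↔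
        ∀ l < c.1, l ≠ i → z l = y l := by
    simp only [Fin.forall_iff, ne_eq, Fin.ext_iff, hinj]
  have heq {i : ℕ} (hi : i < c.1) : (fun l : Fin c.1 => toNum (z l)) =
      (fun l : Fin c.1 => toNum (y l)) ↔
      z i = y i ∧ ∀ l < c.1, l ≠ i → z l = y l := by
    simp only [funext_iff, Fin.forall_iff, hinj]
    grind
  have hq (t : ℕ) : Fin.ofNat (c.2.1 + 1) t = q ↔ t % (c.2.1 + 1) = q.val := Fin.ext_iff
  rcases h : c.instr q' with _ | ⟨i, t⟩ | ⟨i, t, t'⟩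
  · simp [δ_none h, movesAt, h, moves, CMmatrix.AbstractStep]
  · rw [δ_inc h]
    by_cases hi : i < c.1
    · rw [dif_pos hi]
      refine (and_congr (hq _) (and_congr_right' (hframe hi))).trans ?_
      simp [movesAt, h, moves, hi, mem_numMoves_zero, hy, hz]
    · simp [hi, movesAt, h, moves, CMmatrix.AbstractStep]
  · rw [δ_dec h]
    by_cases hi : i < c.1
    · rw [dif_pos hi]
      refine (or_congr (and_congr (hq _) (and_congr_right' (hframe hi)))
        (and_congr (hq _) (and_congr_right' (heq hi)))).trans ?_
      simp [movesAt, h, moves, hi, mem_numMoves_one, mem_numMoves_two, hy, hz, and_assoc]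
    · simp [hi, movesAt, h, moves, CMmatrix.AbstractStep]

end moves

section value
variable {c : CMCode}

/-- The state of the configuration with the code `w`. -/
def state (c : CMCode) (w : ℕ) : ℕ := (w - 6) % (c.2.1 + 1)

/-- The code of the abstract number in the counter `i` of the configuration with the code `w`. -/
def reg (c : CMCode) (w i : ℕ) : ℕ := digit 4 i ((w - 6) / (c.2.1 + 1))

lemma reg_lt (w i : ℕ) : c.reg w i < 4 := digit_lt (by simp) _ _

/-- The truth-value of ℂ with the code `w`. The code of `error` is `0` because this is the default
of `decodeNMat`. -/
def value (c : CMCode) (w : ℕ) : CMVal c.machine :=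
  if w = 0 then .error
  else if w ≤ 4 then .num (toNum (w - 1))
  else if w = 5 then .init
  else .conf (Fin.ofNat (c.2.1 + 1) (w - 6)) fun i => toNum (c.reg w i)

lemma value_zero : c.value 0 = .error := rfl

lemma value_succ {a : ℕ} (ha : a < 4) : c.value (a + 1) = .num (toNum a) := by
  simp [value, Nat.succ_le_of_lt ha]

lemma value_five : c.value 5 = .init := rfl

lemma value_conf {w : ℕ} (hw : 6 ≤ w) : c.value w =
    .conf (Fin.ofNat (c.2.1 + 1) (w - 6)) fun i => toNum (c.reg w i) := by
  rw [value, if_neg (by omega), if_neg (by omega), if_neg (by omega)]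

lemma value_eq_error_iff {w : ℕ} : c.value w = .error ↔ w = 0 := by
  unfold value
  split_ifs <;> grind

lemma value_eq_init_iff {w : ℕ} : c.value w = .init ↔ w = 5 := by
  unfold value
  split_ifs <;> grind

lemma value_eq_num_iff {w a : ℕ} (ha : a < 4) : c.value w = .num (toNum a) ↔ w = a + 1 := by
  unfold value
  split_ifs <;> grind [toNum_inj]

/-- The largest code of a truth-value of ℂ. -/
def maxValue (c : CMCode) : ℕ := 5 + 4 ^ c.1 * (c.2.1 + 1)

lemma exists_value_eq (x : CMVal c.machine) : ∃ w : Fin (c.maxValue + 1), c.value w = x := by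
  have hpos : 0 < 4 ^ c.1 * (c.2.1 + 1) := by positivity
  have exists_toNum : ∀ x, ∃ a < 4, toNum a = x := by
    rintro (_ | _ | _ | _)
    exacts [⟨0, by simp, rfl⟩, ⟨1, by simp, rfl⟩, ⟨2, by simp, rfl⟩, ⟨3, by simp, rfl⟩]
  choose num hnum_lt hnum using exists_toNum
  rcases x with x | ⟨q, r⟩ | _ | _
  · exact ⟨⟨num x + 1, by grind [maxValue]⟩, by rw [value_succ (hnum_lt x), hnum]⟩
  · change Fin (c.2.1 + 1) at q
    change Fin c.1 → CMNum at r
    let R := finFunctionFinEquiv fun i => (⟨num (r i), hnum_lt _⟩ : Fin 4)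
    let k := finProdFinEquiv (R, q)
    obtain ⟨hkR, hkq⟩ := Prod.ext_iff.1 (finProdFinEquiv.symm_apply_apply (R, q))
    have hreg (i : Fin c.1) : c.reg (k + 6) i = num (r i) :=
      (congrArg (digit 4 i) (congrArg Fin.val hkR)).trans (digit_sum _ i)
    refine ⟨⟨k + 6, by grind [maxValue, k.is_lt]⟩, (value_conf (by simp)).trans ?_⟩
    exact congrArg₂ CMVal.conf hkq (funext fun i => (congrArg toNum (hreg i)).trans (hnum _))
  · exact ⟨⟨5, by grind [maxValue]⟩, value_five⟩
  · exact ⟨0, value_zero⟩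

end value

section interp
variable {c : CMCode}

/-- The arithmetical form of `stepC`, for codes of truth-values: the arguments of `step^q` have the
codes `d 0, …, d n`. -/
def StepCode (c : CMCode) (q : ℕ) (d : ℕ → ℕ) (w : ℕ) : Prop :=
  6 ≤ w ∧ q = c.state w ∧ (∀ i < c.1, d (i + 1) = c.reg w i + 1) ∧
    (d 0 = 5 ∧ c.2.2.1 % (c.2.1 + 1) = q ∧
        ((∀ i < c.1, c.reg w i = 0) ∨ ∀ i < c.1, c.reg w i = 1) ∨
      6 ≤ d 0 ∧ ∃ e ∈ c.movesAt (c.state (d 0)), e.2.2 % (c.2.1 + 1) = q ∧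
        (e.1, c.reg (d 0) e.2.1, c.reg w e.2.1) ∈ numMoves ∧
        ∀ l < c.1, l ≠ e.2.1 → c.reg w l = c.reg (d 0) l)

/-- The graph of the interpretations of ℂ without the value `error`, in terms of codes. -/
def InterpCode (c : CMCode) : ℕ → (ℕ → ℕ) → ℕ → Prop
  | 0, _, w => w = 1 ∨ w = 2
  | 1, _, w => w = 5
  | 2, d, w => ∃ e ∈ numMoves, e.1 = 0 ∧ d 0 = e.2.1 + 1 ∧ w = e.2.2 + 1
  | q + 3, d, w => c.StepCode q d w

/-- The number of a connective in the order `zero`, `eps`, `succ`, `step 0`, `step 1`, …. -/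
def connCode : CMConn c.machine → ℕ
  | .zero => 0
  | .eps => 1
  | .succ => 2
  | .step q => Fin.val (n := c.2.1 + 1) q + 3

lemma stepOK_value_iff {q : Fin (c.2.1 + 1)} {w w' : ℕ} :
    stepOK c.machine q (c.value w') (fun i => toNum (c.reg w i)) ↔
      w' = 5 ∧ c.2.2.1 % (c.2.1 + 1) = q ∧
          ((∀ i < c.1, c.reg w i = 0) ∨ ∀ i < c.1, c.reg w i = 1) ∨
        6 ≤ w' ∧ ∃ e ∈ c.movesAt (c.state w'), e.2.2 % (c.2.1 + 1) = q ∧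
          (e.1, c.reg w' e.2.1, c.reg w e.2.1) ∈ numMoves ∧
          ∀ l < c.1, l ≠ e.2.1 → c.reg w l = c.reg w' l := by
  obtain hw' | hw' := lt_or_ge w' 6
  · have hconf : ∀ q' y, c.value w' ≠ .conf q' y := by
      unfold value
      split_ifs <;> first | omega | simp
    have hq : q = c.machine.qinit ↔ c.2.2.1 % (c.2.1 + 1) = q := Fin.ext_iff.trans eq_comm
    have hreg (i : ℕ) {a : ℕ} (ha : a < 4) : toNum (c.reg w i) = toNum a ↔ c.reg w i = a :=
      toNum_inj (c.reg_lt w i) ha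
    have hall {a : ℕ} (ha : a < 4) : (∀ i : Fin c.1, toNum (c.reg w i) = toNum a) ↔
        ∀ i < c.1, c.reg w i = a := by
      simp only [hreg _ ha, Fin.forall_iff]
    rw [or_iff_left (by omega)]
    refine (or_iff_left (by simp [hconf])).trans ?_
    exact and_congr value_eq_init_iff (and_congr hq
      (or_congr (hall (a := 0) (by simp)) (hall (a := 1) (by simp))))
  · rw [or_iff_right (by omega), and_iff_right hw', value_conf hw']
    exact CMmatrix.stepOK_conf_iff.trans (abstractStep_iff (c.reg_lt w') (c.reg_lt w))

lemma stepCode_iff {q : Fin (c.2.1 + 1)} {d : ℕ → ℕ} {w : ℕ} :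
    c.StepCode q d w ↔
      w ≠ 0 ∧ c.value w ∈ stepC c.machine q (c.value (d 0)) fun i => c.value (d (i + 1)) := by
  obtain hw | hw := lt_or_ge w 6
  · refine iff_of_false (fun h => by have := h.1; omega) fun ⟨h0, h⟩ => ?_
    rcases h with ⟨_, _, _, h⟩ | ⟨-, h⟩
    · unfold value at h
      split_ifs at h
      omega
    · exact h0 (value_eq_error_iff.1 h)
  · have hargs : (∀ i < c.1, d (i + 1) = c.reg w i + 1) ↔
        ∀ i : Fin c.1, c.value (d (i + 1)) = .num (toNum (c.reg w i)) := by
      simp only [value_eq_num_iff (c.reg_lt w _), Fin.forall_iff]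
    rw [and_iff_right (by omega), value_conf hw, StepCode, and_iff_right hw]
    refine Iff.trans ?_ CMmatrix.conf_mem_stepC_iff.symm
    exact and_congr (eq_comm.trans (Fin.ext_iff (a := Fin.ofNat _ _)).symm)
      (and_congr hargs stepOK_value_iff.symm)

lemma exists_of_value_eq_num {w : ℕ} {x : CMNum} (h : c.value w = .num x) :
    ∃ a < 4, w = a + 1 ∧ toNum a = x := by
  unfold value at h
  split_ifs at h with h0 h4
  exact ⟨w - 1, by omega, by omega, CMVal.num.inj h⟩

lemma succCode_iff {a w : ℕ} : (∃ e ∈ numMoves, e.1 = 0 ∧ a = e.2.1 + 1 ∧ w = e.2.2 + 1) ↔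
    w ≠ 0 ∧ c.value w ∈ succC c.machine (c.value a) := by
  constructor
  · rintro ⟨⟨k, x, y⟩, he, rfl, rfl, rfl⟩
    obtain ⟨hx, hy⟩ : x < 4 ∧ y < 4 :=
      (by decide : ∀ e ∈ numMoves, e.2.1 < 4 ∧ e.2.2 < 4) _ he
    rw [value_succ hx, value_succ hy]
    exact ⟨y.succ_ne_zero, _, (mem_numMoves_zero hx hy).1 he, rfl⟩
  · rintro ⟨h0, h⟩
    rcases ha : c.value a with x | _ | _ | _ <;> rw [ha] at h
    · obtain ⟨y, hy, hw⟩ := h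
      obtain ⟨a, ha4, rfl, rfl⟩ := exists_of_value_eq_num ha
      obtain ⟨b, hb4, rfl, rfl⟩ := exists_of_value_eq_num hw.symm
      exact ⟨_, (mem_numMoves_zero ha4 hb4).2 hy, rfl, rfl, rfl⟩
    all_goals exact absurd (value_eq_error_iff.1 h) h0

lemma interpCode_connCode_iff {κ : CMConn c.machine} {d : ℕ → ℕ} {w : ℕ} :
    c.InterpCode (connCode κ) d w ↔
      w ≠ 0 ∧ c.value w ∈ (CMmatrix c.machine).interp κ fun i => c.value (d i) := by
  cases κ with
  | zero =>
    have h : c.value w ∈ zeroC c.machine ↔ w = 1 ∨ w = 2 :=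
      or_congr (value_eq_num_iff (a := 0) (by simp)) (value_eq_num_iff (a := 1) (by simp))
    exact (and_iff_right_of_imp (by omega : w = 1 ∨ w = 2 → w ≠ 0)).symm.trans
      (and_congr_right' h.symm)
  | eps =>
    exact (and_iff_right_of_imp (by omega : w = 5 → w ≠ 0)).symm.trans
      (and_congr_right' value_eq_init_iff.symm)
  | succ => exact succCode_iff
  | step q => exact stepCode_iff

end interp

section toNMatCode
variable {c : CMCode}

/-- The arities of the connectives of ℂ in the order of `connCode`. -/
def arities (c : CMCode) : List ℕ := 0 :: 0 :: 1 :: List.replicate (c.2.1 + 1) (c.1 + 1)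

/-- The codes of the designated truth-values of ℂ. -/
def designated (c : CMCode) : List ℕ :=
  (List.range (c.maxValue + 1)).filter fun w => 6 ≤ w ∧ c.movesAt (c.state w) = []

/-- The code of the Nmatrix ℂ. -/
noncomputable def toNMatCode (c : CMCode) : NMatCode :=
  (c.arities, c.maxValue,
    NMatCode.tabulate c.arities c.maxValue fun j k =>
      c.InterpCode j fun i => digit (c.maxValue + 1) i k,
    c.designated)

/-- The Nmatrix with the code `c.toNMatCode`. -/
noncomputable abbrev decodedMatrix (c : CMCode) :
    NMatrix (codeSig c.arities) (Fin (c.maxValue + 1)) :=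
  decodeNMat c.toNMatCode.1 c.toNMatCode.2.1 c.toNMatCode.2.2.1 c.toNMatCode.2.2.2

lemma connCode_lt (κ : CMConn c.machine) : connCode κ < c.arities.length := by
  cases κ with
  | step q => simpa [arities, connCode] using (q : Fin (c.2.1 + 1)).is_lt
  | _ => simp [arities, connCode]

/-- The connective of `codeSig c.arities` that stands for `κ`. -/
def conn (κ : CMConn c.machine) : (codeSig c.arities).Conn := ⟨connCode κ, connCode_lt κ⟩

lemma conn_surjective : Function.Surjective (conn (c := c)) := by
  rintro ⟨j, hj⟩
  match j, hj with
  | 0, _ => exact ⟨.zero, rfl⟩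
  | 1, _ => exact ⟨.eps, rfl⟩
  | 2, _ => exact ⟨.succ, rfl⟩
  | q + 3, hj =>
    have hq : q < c.2.1 + 1 := by simpa [arities] using hj
    exact ⟨.step (⟨q, hq⟩ : Fin (c.2.1 + 1)), rfl⟩

lemma arity_conn (κ : CMConn c.machine) :
    (CMSig c.machine).arity κ = (codeSig c.arities).arity (conn κ) := by
  cases κ with
  | step q => simp [CMSig, arities, connCode, conn, decodeCM]
  | _ => rfl

lemma mem_designated_iff (x : Fin (c.maxValue + 1)) :
    x ∈ c.decodedMatrix.D ↔ c.value x ∈ (CMmatrix c.machine).D := by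
  have hx : x ∈ c.decodedMatrix.D ↔ 6 ≤ (x : ℕ) ∧ c.movesAt (c.state x) = [] := by
    simp [decodeNMat, toNMatCode, designated, Fin.is_le]
  refine hx.trans ⟨fun ⟨h, hnil⟩ => ⟨_, _, value_conf h, movesAt_eq_nil_iff.1 hnil⟩, ?_⟩
  rintro ⟨q, r, hqr, hδ⟩
  have h : 6 ≤ (x : ℕ) := by
    by_contra!
    unfold value at hqr
    split_ifs at hqr
    omega
  rw [value_conf h] at hqr
  cases hqr
  exact ⟨h, movesAt_eq_nil_iff.2 hδ⟩

/-- Why `error` can be left to the default of `decodeNMat`: a set interpreting a connective of ℂ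
contains nothing else if it contains `error`. -/
lemma value_mem_iff {I : Set (CMVal c.machine)} (hI : I.Nonempty)
    (herr : .error ∈ I → ∀ x ∈ I, x = .error) {x : Fin (c.maxValue + 1)} :
    (((x : ℕ) ≠ 0 ∧ c.value x ∈ I) ∨
      x = 0 ∧ ∀ y : Fin (c.maxValue + 1), ¬((y : ℕ) ≠ 0 ∧ c.value y ∈ I)) ↔ c.value x ∈ I := by
  obtain rfl | hx := eq_or_ne x 0
  · obtain ⟨z, hz⟩ := hI
    obtain ⟨y, rfl⟩ := exists_value_eq z
    simp only [Fin.coe_ofNat_eq_mod, Nat.zero_mod, ne_eq, not_true_eq_false, false_and, false_or,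
      true_and, value_zero]
    refine ⟨fun h => ?_, fun h y hy => hy.1 (value_eq_error_iff.1 (herr h _ hy.2))⟩
    have hy : (y : ℕ) = 0 := by_contra fun hy => h y ⟨hy, hz⟩
    rwa [hy] at hz
  · simp [hx]

lemma mem_interp_conn_iff (κ : CMConn c.machine)
    (a : Fin ((codeSig c.arities).arity (conn κ)) → Fin (c.maxValue + 1))
    (x : Fin (c.maxValue + 1)) :
    x ∈ c.decodedMatrix.interp (conn κ) a ↔
      c.value x ∈ (CMmatrix c.machine).interp κ fun i =>
        c.value (a (Fin.cast (arity_conn κ) i)) := by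
  have hdigit (i : Fin ((CMSig c.machine).arity κ)) :
      digit (c.maxValue + 1) i (∑ j, (a j : ℕ) * (c.maxValue + 1) ^ (j : ℕ)) =
        a (Fin.cast (arity_conn κ) i) :=
    digit_sum a (Fin.cast (arity_conn κ) i)
  have hcode (y : ℕ) := interpCode_connCode_iff (κ := κ) (w := y)
    (d := fun i => digit (c.maxValue + 1) i (∑ j, (a j : ℕ) * (c.maxValue + 1) ^ (j : ℕ)))
  simp only [hdigit] at hcode
  refine NMatCode.mem_interp_tabulate_iff.trans ?_
  refine (or_congr (hcode _)
    (and_congr_right' (forall_congr' fun _ => not_congr (hcode _)))).trans ?_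
  exact value_mem_iff ((CMmatrix c.machine).interp_nonempty κ _) fun herr _ =>
    CMmatrix.eq_error_of_mem_interp herr

theorem thmExistsProblem_toNMatCode_iff : thmExistsProblem c.toNMatCode ↔ haltProblem c :=
  (NMatrix.exists_entails_iff_of_surjective conn_surjective arity_conn
    (f := fun x : Fin (c.maxValue + 1) => c.value x) exists_value_eq mem_interp_conn_iff
    mem_designated_iff).symm.trans CMmatrix.exists_entails_iff_halts

end toNMatCode

section primrec
variable {α : Type} [Primcodable α] {c : α → CMCode} {q w i k : α → ℕ}

lemma primrec_states (hc : Primrec c) : Primrec fun a => (c a).2.1 + 1 :=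
  Primrec.succ.comp (Primrec.fst.comp (Primrec.snd.comp hc))

lemma primrec_state (hc : Primrec c) (hw : Primrec w) : Primrec fun a => (c a).state (w a) :=
  Primrec.nat_mod.comp (Primrec.nat_sub.comp hw (.const 6)) (primrec_states hc)

lemma primrec_reg (hc : Primrec c) (hw : Primrec w) (hi : Primrec i) :
    Primrec fun a => (c a).reg (w a) (i a) :=
  primrec_digit (.const 4) hi
    (Primrec.nat_div.comp (Primrec.nat_sub.comp hw (.const 6)) (primrec_states hc))

lemma primrec_maxValue : Primrec maxValue :=
  Primrec.nat_add.comp (.const 5)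
    (Primrec.nat_mul.comp (primrec_pow.comp (.const 4) .fst) (primrec_states .id))

lemma primrec_moves : Primrec moves := by
  have hinc : Primrec fun e : ℕ × ℕ => [(0, e)] :=
    Primrec.list_cons.comp (.pair (.const 0) .id) (.const [])
  have hdec : Primrec fun e : ℕ × ℕ × ℕ => [(1, e.1, e.2.1), (2, e.1, e.2.2)] :=
    Primrec.list_cons.comp
      (.pair (.const 1) (.pair .fst (Primrec.fst.comp .snd)))
      (Primrec.list_cons.comp (.pair (.const 2) (.pair .fst (Primrec.snd.comp .snd))) (.const []))
  refine (Primrec.option_casesOn .id (.const [])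
    (Primrec.sumCasesOn .snd (hinc.comp .snd).to₂ (hdec.comp .snd).to₂).to₂).of_eq fun o => ?_
  rcases o with _ | _ | _ <;> rfl

lemma primrec_movesAt (hc : Primrec c) (hq : Primrec q) :
    Primrec fun a => (c a).movesAt (q a) := by
  have hinstr : Primrec fun a => (c a).instr (q a) :=
    (Primrec.list_getD none).comp (Primrec.snd.comp (Primrec.snd.comp (Primrec.snd.comp hc))) hq
  exact (PrimrecRel.listFilter (R := fun (e : ℕ × ℕ × ℕ) n => e.2.1 < n)
    (Primrec.nat_lt.comp (Primrec.fst.comp (Primrec.snd.comp .fst)) .snd)).comp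
    (primrec_moves.comp hinstr) (Primrec.fst.comp hc)

lemma primrecPred_init (hc : Primrec c) (hw : Primrec w) (hq : Primrec q) :
    PrimrecPred fun a => (c a).2.2.1 % ((c a).2.1 + 1) = q a ∧
      ((∀ i < (c a).1, (c a).reg (w a) i = 0) ∨ ∀ i < (c a).1, (c a).reg (w a) i = 1) := by
  have hreg (b : ℕ) : PrimrecPred fun a => ∀ i < (c a).1, (c a).reg (w a) i = b :=
    primrecPred_forall_lt (Primrec.fst.comp hc)
      (Primrec.eq.comp (primrec_reg (hc.comp .fst) (hw.comp .fst) .snd) (.const b))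
  exact (Primrec.eq.comp (Primrec.nat_mod.comp
    (Primrec.fst.comp (Primrec.snd.comp (Primrec.snd.comp hc))) (primrec_states hc)) hq).and
    ((hreg 0).or (hreg 1))

lemma primrecPred_step {w' : α → ℕ} (hc : Primrec c) (hw' : Primrec w') (hw : Primrec w)
    (hq : Primrec q) :
    PrimrecPred fun a => ∃ e ∈ (c a).movesAt ((c a).state (w' a)), e.2.2 % ((c a).2.1 + 1) = q a ∧
      (e.1, (c a).reg (w' a) e.2.1, (c a).reg (w a) e.2.1) ∈ numMoves ∧
      ∀ l < (c a).1, l ≠ e.2.1 → (c a).reg (w a) l = (c a).reg (w' a) l := by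
  refine primrecPred_exists_mem (primrec_movesAt hc (primrec_state hc hw')) (.and ?_ (.and ?_ ?_))
  · exact Primrec.eq.comp (Primrec.nat_mod.comp (Primrec.snd.comp (Primrec.snd.comp .snd))
      (primrec_states (hc.comp .fst))) (hq.comp .fst)
  · have hi : Primrec fun x : α × ℕ × ℕ × ℕ => x.2.2.1 := Primrec.fst.comp (Primrec.snd.comp .snd)
    have hmem : PrimrecPred fun e : ℕ × ℕ × ℕ => e ∈ numMoves :=
      (primrecPred_exists_mem (.const numMoves) (Primrec.eq.comp .fst .snd)).of_eq (by simp)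
    exact hmem.comp ((Primrec.fst.comp .snd).pair
      ((primrec_reg (hc.comp .fst) (hw'.comp .fst) hi).pair
        (primrec_reg (hc.comp .fst) (hw.comp .fst) hi)))
  · have hc' : Primrec fun x : (α × ℕ × ℕ × ℕ) × ℕ => c x.1.1 := hc.comp (Primrec.fst.comp .fst)
    have hne : PrimrecPred fun x : (α × ℕ × ℕ × ℕ) × ℕ => x.2 = x.1.2.2.1 :=
      Primrec.eq.comp .snd (Primrec.fst.comp (Primrec.snd.comp (Primrec.snd.comp .fst)))
    refine primrecPred_forall_lt (Primrec.fst.comp (hc.comp .fst))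
      ((hne.or (Primrec.eq.comp (primrec_reg hc' (hw.comp (Primrec.fst.comp .fst)) .snd)
        (primrec_reg hc' (hw'.comp (Primrec.fst.comp .fst)) .snd))).of_eq fun x => ?_)
    exact or_iff_not_imp_left

lemma primrecPred_stepCode {d : α → ℕ → ℕ} (hc : Primrec c) (hq : Primrec q)
    (hd : Primrec₂ d) (hw : Primrec w) :
    PrimrecPred fun a => (c a).StepCode (q a) (d a) (w a) := by
  have hd0 : Primrec fun a => d a 0 := hd.comp .id (.const 0)
  have hargs : PrimrecPred fun a => ∀ i < (c a).1, d a (i + 1) = (c a).reg (w a) i + 1 :=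
    primrecPred_forall_lt (Primrec.fst.comp hc)
      (Primrec.eq.comp (hd.comp .fst (Primrec.succ.comp .snd))
        (Primrec.succ.comp (primrec_reg (hc.comp .fst) (hw.comp .fst) .snd)))
  exact (Primrec.nat_le.comp (.const 6) hw).and ((Primrec.eq.comp hq (primrec_state hc hw)).and
    (hargs.and (((Primrec.eq.comp hd0 (.const 5)).and (primrecPred_init hc hw hq)).or
      ((Primrec.nat_le.comp (.const 6) hd0).and (primrecPred_step hc hd0 hw hq)))))

lemma interpCode_iff {c : CMCode} {j w : ℕ} {d : ℕ → ℕ} : c.InterpCode j d w ↔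
    j = 0 ∧ (w = 1 ∨ w = 2) ∨ j = 1 ∧ w = 5 ∨
      j = 2 ∧ (∃ e ∈ numMoves, e.1 = 0 ∧ d 0 = e.2.1 + 1 ∧ w = e.2.2 + 1) ∨
      3 ≤ j ∧ c.StepCode (j - 3) d w := by
  rcases j with _ | _ | _ | q <;> simp [InterpCode]

lemma primrecPred_interpCode {d : α → ℕ → ℕ} {j : α → ℕ} (hc : Primrec c) (hj : Primrec j)
    (hd : Primrec₂ d) (hw : Primrec w) :
    PrimrecPred fun a => (c a).InterpCode (j a) (d a) (w a) := by
  have hj' (b : ℕ) : PrimrecPred fun a => j a = b := Primrec.eq.comp hj (.const b)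
  have hw' (b : ℕ) : PrimrecPred fun a => w a = b := Primrec.eq.comp hw (.const b)
  have hsucc : PrimrecPred fun a =>
      ∃ e ∈ numMoves, e.1 = 0 ∧ d a 0 = e.2.1 + 1 ∧ w a = e.2.2 + 1 := by
    refine primrecPred_exists_mem (.const numMoves) (.and ?_ (.and ?_ ?_))
    · exact Primrec.eq.comp (Primrec.fst.comp .snd) (.const 0)
    · exact Primrec.eq.comp (hd.comp .fst (.const 0))
        (Primrec.succ.comp (Primrec.fst.comp (Primrec.snd.comp .snd)))
    · exact Primrec.eq.comp (hw.comp .fst)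
        (Primrec.succ.comp (Primrec.snd.comp (Primrec.snd.comp .snd)))
  have hstep : PrimrecPred fun a => (c a).StepCode (j a - 3) (d a) (w a) :=
    primrecPred_stepCode hc (Primrec.nat_sub.comp hj (.const 3)) hd hw
  exact (((hj' 0).and ((hw' 1).or (hw' 2))).or (((hj' 1).and (hw' 5)).or
    (((hj' 2).and hsucc).or ((Primrec.nat_le.comp (.const 3) hj).and hstep)))).of_eq
    fun a => interpCode_iff.symm

lemma primrec_arities : Primrec arities := by
  have hreplicate : Primrec fun c : CMCode => List.replicate (c.2.1 + 1) (c.1 + 1) := by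
    refine (Primrec.list_map (Primrec.list_range.comp (primrec_states .id))
      (Primrec.succ.comp (Primrec.fst.comp .fst)).to₂).of_eq fun c => ?_
    simp
  exact Primrec.list_cons.comp (.const 0) (Primrec.list_cons.comp (.const 0)
    (Primrec.list_cons.comp (.const 1) hreplicate))

lemma primrec_designated : Primrec designated := by
  have hR : PrimrecRel fun (w : ℕ) (c : CMCode) => 6 ≤ w ∧ c.movesAt (c.state w) = [] :=
    (Primrec.nat_le.comp (.const 6) .fst).and
      (Primrec.eq.comp (primrec_movesAt .snd (primrec_state .snd .fst)) (.const []))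
  exact hR.listFilter.comp (Primrec.list_range.comp (Primrec.succ.comp primrec_maxValue)) .id

lemma primrec_toNMatCode : Primrec toNMatCode := by
  refine primrec_arities.pair (primrec_maxValue.pair (.pair ?_ primrec_designated))
  refine NMatCode.primrec_tabulate primrec_arities primrec_maxValue (primrecPred_interpCode
    (Primrec.fst.comp .snd) (Primrec.fst.comp (Primrec.snd.comp .snd)) ?_ .fst)
  exact primrec_digit (Primrec.succ.comp (primrec_maxValue.comp
    (Primrec.fst.comp (Primrec.snd.comp .fst)))) .snd
    (Primrec.snd.comp (Primrec.snd.comp (Primrec.snd.comp .fst)))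

theorem haltProblem_manyOneReducible_thmExistsProblem : haltProblem ≤₀ thmExistsProblem :=
  ⟨toNMatCode, primrec_toNMatCode.to_comp, fun _ => thmExistsProblem_toNMatCode_iff.symm⟩

end primrec

end CMCode

/-- If the theorem existence problem for finite Nmatrices were decidable, then
the halting problem for counter machines with all counters initially zero would be decidable;
consequently (since the latter is undecidable), the theorem existence problem for finite
Nmatrices is undecidable. -/
theorem stmt_9 :
    (ComputablePred thmExistsProblem → ComputablePred haltProblem) ∧
    ¬ ComputablePred thmExistsProblem := by
  have h := ComputablePred.computable_of_manyOneReducible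
    CMCode.haltProblem_manyOneReducible_thmExistsProblem
  exact ⟨h, not_computablePred_haltProblem ∘ h⟩
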